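/- Every set of 10 points in the plane in general position contains a 5-hole; that is, h⁽²⁾(5) ≤ 10. -/

import Mathlib

/-!
The theorem reduces to a finite statement about orientations of triples, which is then settled by
a verified case distinction.

Let `p 0` be the lexicographically smallest point and sort the other nine points
counterclockwise around it (`exists_sorted`); the triangles `p 0, p i, p j` with `0 < i < j` are
then counterclockwise. By general position every other triangle is either clockwise or
counterclockwise (`orient_ne_zero`), so one can branch on orientations.

A branch ends in one of two ways. Either five points are found such that every one of the ten
points is separated, by a line through two of the ten points, from those of the five that are
different from it. This is read off from orientations, and says at once that the five points are
in convex position and that no further point lies in their convex hull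
(`not_mem_convexHull_of_orient`). Or the orientations contradict the three-term Grassmann–Plücker
relation (`orient_plucker`): a point inside a triangle has the three vertices on one side of a line
through it.

The tree of cases is the term `Refutation.harborth`, with about 1400 leaves. The Boolean function
`Refutation.check` verifies such a tree, `Refutation.check_sound` proves that a verified tree yields
a hole, and `Refutation.check_harborth` evaluates the function on the given tree by kernel reduction.
-/

/-- A finite set `S` of points in `ℝ^d` is in *general position* if every
`(d+1)`-element subset of `S` is affinely independent. -/
def InGeneralPosition (d : ℕ) (S : Finset (Fin d → ℝ)) : Prop :=
  ∀ T ⊆ S, T.card = d + 1 → AffineIndependent ℝ ((↑) : T → (Fin d → ℝ))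

/-- A finite set of points is in *convex position* if no point of the set lies in
the convex hull of the other points of the set. -/
def InConvexPosition (d : ℕ) (X : Finset (Fin d → ℝ)) : Prop :=
  ∀ p ∈ X, p ∉ convexHull ℝ (↑(X.erase p) : Set (Fin d → ℝ))

/-- A *k-hole* in `S` is a `k`-element subset `X ⊆ S` in convex position such that
no point of `S \ X` lies in the convex hull of `X`. -/
def IsHole (d k : ℕ) (S X : Finset (Fin d → ℝ)) : Prop :=
  X ⊆ S ∧ X.card = k ∧ InConvexPosition d X ∧
    ∀ p ∈ S, p ∉ X → p ∉ convexHull ℝ (↑X : Set (Fin d → ℝ))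

/-! ### Orientations and convex hulls -/

/-- Twice the signed area of the triangle `a b c`; it is positive exactly when the triangle is
oriented counterclockwise. -/
def orient (a b c : Fin 2 → ℝ) : ℝ :=
  (b 0 - a 0) * (c 1 - a 1) - (b 1 - a 1) * (c 0 - a 0)

theorem orient_rotate (a b c : Fin 2 → ℝ) : orient b c a = orient a b c := by
  unfold orient; ring

theorem orient_swap (a b c : Fin 2 → ℝ) : orient b a c = -orient a b c := by
  unfold orient; ring

theorem orient_antisymm (a b c : Fin 2 → ℝ) : orient a c b = -orient a b c := by
  unfold orient; ring

theorem orient_left (a b : Fin 2 → ℝ) : orient a b a = 0 := by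
  unfold orient; ring

theorem orient_right (a b : Fin 2 → ℝ) : orient a b b = 0 := by
  unfold orient; ring

/-- The three-term Grassmann–Plücker relation. -/
theorem orient_plucker (x a b c d : Fin 2 → ℝ) :
    orient x a b * orient x c d + orient x c a * orient x b d
      + orient x a d * orient x b c = 0 := by
  unfold orient; ring

/-- A point strictly on the right of the line `a b` is not in the convex hull of points lying
weakly on its left. -/
theorem not_mem_convexHull_of_orient {T : Set (Fin 2 → ℝ)} {a b q : Fin 2 → ℝ}
    (hT : ∀ t ∈ T, 0 ≤ orient a b t) (hq : 0 < orient b a q) : q ∉ convexHull ℝ T := by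
  have hconv : Convex ℝ {x : Fin 2 → ℝ | 0 ≤ orient a b x} := by
    intro x hx y hy s t hs ht hst
    have key : orient a b (s • x + t • y) = s * orient a b x + t * orient a b y := by
      obtain rfl : t = 1 - s := by linarith
      simp only [orient, Pi.add_apply, Pi.smul_apply, smul_eq_mul]
      ring
    simp only [Set.mem_ofPred_eq] at hx hy ⊢
    rw [key]
    positivity
  intro hmem
  have h : 0 ≤ orient a b q := convexHull_min hT hconv hmem
  rw [orient_swap] at hq
  linarith

theorem orient_ne_zero {S : Finset (Fin 2 → ℝ)} (hgp : InGeneralPosition 2 S)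
    {a b c : Fin 2 → ℝ} (ha : a ∈ S) (hb : b ∈ S) (hc : c ∈ S)
    (hab : a ≠ b) (hac : a ≠ c) (hbc : b ≠ c) : orient a b c ≠ 0 := by
  intro h0
  have hsub : ({a, b, c} : Finset (Fin 2 → ℝ)) ⊆ S := by
    intro x hx
    simp only [Finset.mem_insert, Finset.mem_singleton] at hx
    rcases hx with rfl | rfl | rfl <;> assumption
  have hind := hgp {a, b, c} hsub (Finset.card_eq_three.2 ⟨a, b, c, hab, hac, hbc, rfl⟩)
  have hmem : ∀ i, ![a, b, c] i ∈ ({a, b, c} : Finset (Fin 2 → ℝ)) := by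
    simp [Fin.forall_fin_succ]
  have hinj : Function.Injective ![a, b, c] := by
    intro i j hij
    fin_cases i <;> fin_cases j <;> first | rfl | (exfalso; revert hij; simp [*, Ne.symm])
  have hcol : ¬ Collinear ℝ ({a, b, c} : Set (Fin 2 → ℝ)) := by
    rw [← affineIndependent_iff_not_collinear_set]
    exact hind.comp_embedding
      ⟨fun i => ⟨![a, b, c] i, hmem i⟩, fun i j hij => hinj (Subtype.ext_iff.1 hij)⟩
  apply hcol
  rw [collinear_iff_of_mem (p₀ := a) (by simp)]
  refine ⟨b - a, ?_⟩
  have hc' : ∃ r : ℝ, c = r • (b - a) + a := by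
    unfold orient at h0
    by_cases hx : b 0 - a 0 = 0
    · have hy : b 1 - a 1 ≠ 0 := by
        intro hy
        apply hab
        ext i
        fin_cases i
        · simp only [Fin.zero_eta]; linarith
        · simp only [Fin.mk_one]; linarith
      refine ⟨(c 1 - a 1) / (b 1 - a 1), ?_⟩
      have hz : c 0 - a 0 = 0 := by
        rw [hx] at h0
        have : (b 1 - a 1) * (c 0 - a 0) = 0 := by linarith
        exact (mul_eq_zero.1 this).resolve_left hy
      ext i
      fin_cases i
      · simp [hx]; linarith
      · simp; field_simp; ring
    · refine ⟨(c 0 - a 0) / (b 0 - a 0), ?_⟩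
      ext i
      fin_cases i
      · simp; field_simp; ring
      · simp; field_simp; linarith
  intro q hq
  simp only [Set.mem_insert_iff, Set.mem_singleton_iff] at hq
  rcases hq with rfl | rfl | rfl
  · exact ⟨0, by simp⟩
  · exact ⟨1, by simp⟩
  · obtain ⟨r, hr⟩ := hc'
    exact ⟨r, by simpa using hr⟩

/-! ### Sorting the points around an extreme point -/

/-- A monotone substitute for the polar angle of `(x, y)` in the half plane
`x > 0 ∨ (x = 0 ∧ y > 0)`. -/
noncomputable def angleKey (x y : ℝ) : ℝ := y / (x + |y|)

theorem angleKey_lt {x y x' y' : ℝ} (h : 0 < x ∨ x = 0 ∧ 0 < y)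
    (h' : 0 < x' ∨ x' = 0 ∧ 0 < y') (hlt : angleKey x y < angleKey x' y') :
    0 < x * y' - y * x' := by
  have hp : 0 < x + |y| := by
    rcases h with h | ⟨h, h2⟩ <;> [positivity; (rw [h]; positivity)]
  have hp' : 0 < x' + |y'| := by
    rcases h' with h | ⟨h, h2⟩ <;> [positivity; (rw [h]; positivity)]
  have hx : 0 ≤ x := by rcases h with h | h <;> linarith
  have hx' : 0 ≤ x' := by rcases h' with h | h <;> linarith
  unfold angleKey at hlt
  rw [div_lt_div_iff₀ hp hp'] at hlt
  rcases abs_cases y with ⟨e, s⟩ | ⟨e, s⟩ <;> rcases abs_cases y' with ⟨e', s'⟩ | ⟨e', s'⟩ <;>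
    rw [e, e'] at hlt
  · nlinarith
  · nlinarith
  · have hx0 : 0 < x := by rcases h with h | h <;> linarith
    rcases h' with h' | h' <;> nlinarith
  · nlinarith

theorem angleKey_eq {x y x' y' : ℝ} (h : 0 < x ∨ x = 0 ∧ 0 < y)
    (h' : 0 < x' ∨ x' = 0 ∧ 0 < y') (heq : angleKey x y = angleKey x' y') :
    x * y' - y * x' = 0 := by
  have hp : 0 < x + |y| := by
    rcases h with h | ⟨h, h2⟩ <;> [positivity; (rw [h]; positivity)]
  have hp' : 0 < x' + |y'| := by
    rcases h' with h | ⟨h, h2⟩ <;> [positivity; (rw [h]; positivity)]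
  have hx : 0 ≤ x := by rcases h with h | h <;> linarith
  have hx' : 0 ≤ x' := by rcases h' with h | h <;> linarith
  unfold angleKey at heq
  rw [div_eq_div_iff hp.ne' hp'.ne'] at heq
  rcases abs_cases y with ⟨e, s⟩ | ⟨e, s⟩ <;> rcases abs_cases y' with ⟨e', s'⟩ | ⟨e', s'⟩ <;>
    rw [e, e'] at heq
  · nlinarith
  · nlinarith
  · have hx0 : 0 < x := by rcases h with h | h <;> linarith
    nlinarith
  · nlinarith

/-- A set of ten points in general position can be listed as `p 0, …, p 9` so that `p 1, …, p 9`
appear in counterclockwise order around `p 0`, within a half plane. Here `p 0` is the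
lexicographically smallest point. -/
theorem exists_sorted (S : Finset (Fin 2 → ℝ)) (hcard : S.card = 10)
    (hgp : InGeneralPosition 2 S) :
    ∃ p : ℕ → Fin 2 → ℝ, Set.InjOn p {i | i < 10} ∧
      (∀ q, q ∈ S ↔ ∃ i < 10, p i = q) ∧
      ∀ i j, 0 < i → i < j → j < 10 → 0 < orient (p 0) (p i) (p j) := by
  have hne : S.Nonempty := by rw [← Finset.card_pos]; omega
  obtain ⟨o, ho, hmin⟩ := S.exists_min_image (fun q => toLex (q 0, q 1)) hne
  have hhalf : ∀ q ∈ S.erase o, 0 < q 0 - o 0 ∨ q 0 - o 0 = 0 ∧ 0 < q 1 - o 1 := by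
    intro q hq
    obtain ⟨hqo, hqS⟩ := Finset.mem_erase.1 hq
    rcases (Prod.Lex.toLex_le_toLex.1 (hmin q hqS)) with h | ⟨h, h2⟩
    · left; simpa using h
    · right
      simp only at h h2
      refine ⟨by linarith, ?_⟩
      rcases h2.lt_or_eq with h3 | h3
      · linarith
      · exfalso
        apply hqo
        ext i
        fin_cases i
        · exact h.symm
        · exact h3.symm
  set key : (Fin 2 → ℝ) → ℝ := fun q => angleKey (q 0 - o 0) (q 1 - o 1) with hkey
  have hinj : Set.InjOn key (S.erase o : Finset (Fin 2 → ℝ)) := by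
    intro q hq q' hq' h
    by_contra hqq
    have hq := Finset.mem_coe.1 hq
    have hq' := Finset.mem_coe.1 hq'
    refine orient_ne_zero hgp ho (Finset.mem_of_mem_erase hq) (Finset.mem_of_mem_erase hq')
      (Finset.ne_of_mem_erase hq).symm (Finset.ne_of_mem_erase hq').symm hqq ?_
    exact angleKey_eq (hhalf q hq) (hhalf q' hq') h
  have hc : ((S.erase o).image key).card = 9 := by
    rw [Finset.card_image_of_injOn hinj, Finset.card_erase_of_mem ho, hcard]
  set e := ((S.erase o).image key).orderEmbOfFin hc with he
  have hpre : ∀ i : Fin 9, ∃ q ∈ S.erase o, key q = e i := fun i =>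
    Finset.mem_image.1 (Finset.orderEmbOfFin_mem _ hc i)
  choose g hgS hgk using hpre
  let p : ℕ → Fin 2 → ℝ := fun i => if h : 0 < i ∧ i < 10 then g ⟨i - 1, by omega⟩ else o
  have hp0 : p 0 = o := by simp [p]
  have hp : ∀ i (h : 0 < i) (h' : i < 10), p i = g ⟨i - 1, by omega⟩ := by
    intro i h h'
    simp [p, h, h']
  have hpos : ∀ i j, 0 < i → i < j → j < 10 → 0 < orient (p 0) (p i) (p j) := by
    intro i j hi hij hj
    rw [hp0, hp i hi (by omega), hp j (by omega) hj]
    refine angleKey_lt (hhalf _ (hgS _)) (hhalf _ (hgS _)) ?_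
    have h1 := hgk ⟨i - 1, by omega⟩
    have h2 := hgk ⟨j - 1, by omega⟩
    simp only [hkey] at h1 h2
    rw [h1, h2]
    exact e.strictMono (Fin.mk_lt_mk.2 (by omega))
  refine ⟨p, ?_, ?_, hpos⟩
  · have hlt : ∀ i j, i < j → j < 10 → p i ≠ p j := by
      intro i j hij hj h
      rcases Nat.eq_zero_or_pos i with rfl | hi
      · rw [hp0, hp j hij hj] at h
        exact Finset.ne_of_mem_erase (hgS _) h.symm
      · have := hpos i j hi hij hj
        rw [h, orient_right] at this
        exact lt_irrefl _ this
    intro i hi j hj h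
    rcases lt_trichotomy i j with h1 | h1 | h1
    · exact absurd h (hlt i j h1 hj)
    · exact h1
    · exact absurd h.symm (hlt j i h1 hi)
  · intro q
    constructor
    · intro hq
      by_cases hqo : q = o
      · exact ⟨0, by norm_num, by rw [hp0, hqo]⟩
      · have hqe : q ∈ S.erase o := Finset.mem_erase.2 ⟨hqo, hq⟩
        have : key q ∈ Set.range e := by
          rw [he, Finset.range_orderEmbOfFin]
          exact Finset.mem_coe.2 (Finset.mem_image_of_mem _ hqe)
        obtain ⟨i, hi⟩ := this
        refine ⟨i + 1, by omega, ?_⟩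
        rw [hp _ (by omega) (by omega)]
        exact hinj (Finset.mem_coe.2 (hgS _)) (Finset.mem_coe.2 hqe) ((hgk _).trans hi)
    · rintro ⟨i, hi, rfl⟩
      rcases Nat.eq_zero_or_pos i with rfl | h
      · rw [hp0]; exact ho
      · rw [hp i h hi]; exact Finset.mem_of_mem_erase (hgS _)

/-! ### Refutation trees -/

/-- A case distinction over the orientations of triples among ten points `0, …, 9`. In each leaf
either five points are named that form a hole, or the orientations chosen so far are shown to be
contradictory. -/
inductive Refutation
  /-- The points `a, b, c, d, e` form a hole. -/
  | hole (a b c d e : ℕ)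
  /-- The point `x` lies inside the triangle `a b c`, yet `a`, `b` and `c` are all on the same side
  of the line `x d`. -/
  | clash (x a b c d : ℕ)
  /-- Case distinction on whether the triangle `i j k` is clockwise (`neg`) or counterclockwise
  (`pos`). -/
  | split (i j k : ℕ) (neg pos : Refutation)

namespace Refutation

/-- The position `100 * i + 10 * j + k` of the ordered triple `(i, j, k)` of digits in a bit mask.
Here and in `ccw` the operations on `ℕ` are written without type classes, which keeps kernel
reduction fast. -/
def code (i j k : ℕ) : ℕ := Nat.add (Nat.add (Nat.mul 100 i) (Nat.mul 10 j)) k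

/-- Whether the triangle `i j k` is recorded as counterclockwise in the bit mask `A`, that is,
whether the corresponding bit is set. -/
def ccw (A i j k : ℕ) : Bool := Nat.beq (Nat.land (Nat.shiftRight A (code i j k)) 1) 1

theorem ccw_eq_testBit (A i j k : ℕ) : ccw A i j k = A.testBit (code i j k) := by
  rw [Nat.testBit_eq_decide_div_mod_eq, Bool.eq_iff_iff, decide_eq_true_eq, ccw, Nat.beq_eq,
    ← Nat.shiftRight_eq_div_pow, ← Nat.and_one_is_mod]
  rfl

/-- Record the triangle `i j k` as counterclockwise in the bit mask `A`, in all three rotations. -/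
def record (A i j k : ℕ) : ℕ :=
  A ||| 1 <<< code i j k ||| 1 <<< code j k i ||| 1 <<< code k i j

/-- The pairs of cyclically consecutive entries of `L`, and the pairs formed by `0` and an entry
of `L`. If `L` lists the vertices of a convex polygon counterclockwise, the former are its edges;
the latter serve to separate it from points outside the angle under which it is seen from `0`. -/
def lines (L : List ℕ) : List (ℕ × ℕ) :=
  L.zip (L.tail ++ L.take 1) ++ L.map (fun x => (0, x)) ++ L.map (fun x => (x, 0))

/-- Whether the orientations recorded in `A` exhibit a line in `lines L` that has the point `q`
strictly on its right and the points of `L` weakly on its left. -/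
def separated (A q : ℕ) (L : List ℕ) : Bool :=
  (lines L).any fun l =>
    ccw A l.2 l.1 q && L.all fun t => t.beq l.1 || t.beq l.2 || ccw A l.1 l.2 t

/-- Whether all entries of `L` are among the ten indices `0, …, 9`. -/
def digits (L : List ℕ) : Bool := L.all fun x => x.blt 10

/-- Whether the five points in `v` are certified to form a hole by the orientations in `A`:
every point, whether in `v` or not, is separated from the other points of `v`. -/
def isHole (A : ℕ) (v : List ℕ) : Bool :=
  digits v && decide v.Nodup &&
    [0, 1, 2, 3, 4, 5, 6, 7, 8, 9].all fun q => separated A q (v.erase q)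

/-- Application with `n` evaluated first: matching on `n + 1` makes kernel reduction turn `n` into
a numeral before it enters `f`, so that the bit mask is not recomputed at each use. -/
def withValue (n : ℕ) (f : ℕ → Bool) : Bool :=
  match Nat.add n 1 with
  | 0 => false
  | m + 1 => f m

theorem withValue_eq (n : ℕ) (f : ℕ → Bool) : withValue n f = f n := rfl

/-- `check r A` verifies that the case distinction `r` is complete and that its leaves are as
claimed, given the orientations recorded in the bit mask `A`. -/
def check : Refutation → ℕ → Bool
  | hole a b c d e, A => isHole A [a, b, c, d, e]
  | clash x a b c d, A => digits [x, a, b, c, d] &&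
      ccw A x a b && ccw A x b c && ccw A x c a &&
        (ccw A x a d && ccw A x b d && ccw A x c d || ccw A x d a && ccw A x d b && ccw A x d c)
  | split i j k neg pos, A => i.blt j && j.blt k && k.blt 10 &&
      withValue (record A j i k) (check neg) && withValue (record A i j k) (check pos)

/-- The orientations recorded in the bit mask `A` are correct for the points `p 0, …, p 9`. -/
def Correct (p : ℕ → Fin 2 → ℝ) (A : ℕ) : Prop :=
  ∀ i j k, i < 10 → j < 10 → k < 10 → ccw A i j k = true → 0 < orient (p i) (p j) (p k)

theorem code_inj {i j k i' j' k' : ℕ} (hj : j < 10) (hk : k < 10) (hj' : j' < 10) (hk' : k' < 10)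
    (h : code i j k = code i' j' k') : i = i' ∧ j = j' ∧ k = k' := by
  have h : 100 * i + 10 * j + k = 100 * i' + 10 * j' + k' := h
  omega

theorem Correct.record {p : ℕ → Fin 2 → ℝ} {A i j k : ℕ} (hA : Correct p A)
    (hi : i < 10) (hj : j < 10) (hk : k < 10) (h : 0 < orient (p i) (p j) (p k)) :
    Correct p (record A i j k) := by
  intro a b c ha hb hc habc
  simp only [ccw_eq_testBit, Refutation.record, Nat.testBit_or, Nat.one_shiftLeft, Nat.testBit_two_pow,
    Bool.or_eq_true, decide_eq_true_eq] at habc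
  rcases habc with ((h1 | h1) | h1) | h1
  · exact hA a b c ha hb hc ((ccw_eq_testBit A a b c).trans h1)
  · obtain ⟨rfl, rfl, rfl⟩ := code_inj hj hk hb hc h1
    exact h
  · obtain ⟨rfl, rfl, rfl⟩ := code_inj hk hi hb hc h1
    rwa [orient_rotate]
  · obtain ⟨rfl, rfl, rfl⟩ := code_inj hi hj hb hc h1
    rwa [← orient_rotate]

theorem digits_iff {L : List ℕ} : digits L = true ↔ ∀ x ∈ L, x < 10 := by
  simp [digits, Nat.blt_eq]

theorem lines_lt {L : List ℕ} (hL : ∀ x ∈ L, x < 10) {a b : ℕ} (h : (a, b) ∈ lines L) :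
    a < 10 ∧ b < 10 := by
  simp only [lines, List.mem_append, List.mem_map, Prod.mk.injEq] at h
  rcases h with (h | ⟨x, hx, rfl, rfl⟩) | ⟨x, hx, rfl, rfl⟩
  · obtain ⟨ha, hb⟩ := List.of_mem_zip h
    rcases List.mem_append.1 hb with hb | hb
    · exact ⟨hL a ha, hL b (List.mem_of_mem_tail hb)⟩
    · exact ⟨hL a ha, hL b (List.mem_of_mem_take hb)⟩
  · exact ⟨by norm_num, hL x hx⟩
  · exact ⟨hL x hx, by norm_num⟩

theorem separated_sound {p : ℕ → Fin 2 → ℝ} {A q : ℕ} {L : List ℕ} (hA : Correct p A)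
    (hq : q < 10) (hL : ∀ x ∈ L, x < 10) (h : separated A q L = true) :
    p q ∉ convexHull ℝ (p '' {x | x ∈ L}) := by
  simp only [separated, List.any_eq_true, List.all_eq_true, Bool.and_eq_true, Bool.or_eq_true,
    Nat.beq_eq] at h
  obtain ⟨⟨a, b⟩, hl, hbaq, hall⟩ := h
  obtain ⟨ha, hb⟩ := lines_lt hL hl
  refine not_mem_convexHull_of_orient (a := p a) (b := p b) ?_ (hA b a q hb ha hq hbaq)
  rintro _ ⟨t, ht, rfl⟩
  rcases hall t ht with (rfl | rfl) | h
  · rw [orient_left]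
  · rw [orient_right]
  · exact (hA a b t ha hb (hL t ht) h).le

/-- If no three of the points `p 0, …, p 9` are collinear, a verified case distinction yields five
indices such that each of the ten points is outside the convex hull of the others among the five
points. -/
theorem check_sound {p : ℕ → Fin 2 → ℝ}
    (hp : ∀ i j k, i < j → j < k → k < 10 → orient (p i) (p j) (p k) ≠ 0) (r : Refutation) :
    ∀ A, Correct p A → check r A = true →
      ∃ v : List ℕ, v.length = 5 ∧ v.Nodup ∧ (∀ x ∈ v, x < 10) ∧
        ∀ q < 10, p q ∉ convexHull ℝ (p '' {x | x ∈ v.erase q}) := by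
  induction r with
  | hole a b c d e =>
    intro A hA h
    simp only [check, isHole, Bool.and_eq_true, decide_eq_true_eq, digits_iff] at h
    obtain ⟨⟨hdig, hnd⟩, hsep⟩ := h
    refine ⟨[a, b, c, d, e], rfl, hnd, hdig, fun q hq => ?_⟩
    refine separated_sound hA hq (fun x hx => hdig x (List.mem_of_mem_erase hx)) ?_
    rw [List.all_eq_true] at hsep
    refine hsep q ?_
    interval_cases q <;> simp
  | clash x a b c d =>
    intro A hA h
    simp only [check, Bool.and_eq_true, Bool.or_eq_true, digits_iff, List.forall_mem_cons] at h
    obtain ⟨⟨⟨⟨⟨hx, ha, hb, hc, hd, -⟩, hab⟩, hbc⟩, hca⟩, h⟩ := h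
    have hab := hA x a b hx ha hb hab
    have hbc := hA x b c hx hb hc hbc
    have hca := hA x c a hx hc ha hca
    have rel := orient_plucker (p x) (p a) (p b) (p c) (p d)
    rcases h with ⟨⟨h1, h2⟩, h3⟩ | ⟨⟨h1, h2⟩, h3⟩
    · have h1 := hA x a d hx ha hd h1
      have h2 := hA x b d hx hb hd h2
      have h3 := hA x c d hx hc hd h3
      exact absurd rel (by positivity)
    · have h1 := hA x d a hx hd ha h1
      have h2 := hA x d b hx hd hb h2
      have h3 := hA x d c hx hd hc h3
      rw [orient_antisymm (p x) (p d) (p c), orient_antisymm (p x) (p d) (p b),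
        orient_antisymm (p x) (p d) (p a)] at rel
      have : 0 < orient (p x) (p a) (p b) * orient (p x) (p d) (p c)
        + orient (p x) (p c) (p a) * orient (p x) (p d) (p b)
        + orient (p x) (p d) (p a) * orient (p x) (p b) (p c) := by positivity
      linarith
  | split i j k neg pos ihn ihp =>
    intro A hA h
    simp only [check, withValue_eq, Bool.and_eq_true, Nat.blt_eq] at h
    obtain ⟨⟨⟨⟨hij, hjk⟩, hk⟩, hneg⟩, hpos⟩ := h
    rcases lt_or_gt_of_ne (hp i j k hij hjk hk) with h | h
    · refine ihn _ (hA.record (by omega) (by omega) hk ?_) hneg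
      rw [orient_swap]
      linarith
    · exact ihp _ (hA.record (by omega) (by omega) hk h) hpos

/-- The initial knowledge: `0 i j` is counterclockwise for `0 < i < j`. -/
def initial : ℕ :=
  [1, 2, 3, 4, 5, 6, 7, 8, 9].foldr (fun i A =>
    [1, 2, 3, 4, 5, 6, 7, 8, 9].foldr (fun j A => bif i.blt j then record A 0 i j else A) A) 0

theorem initial_correct {p : ℕ → Fin 2 → ℝ}
    (hp : ∀ i j, 0 < i → i < j → j < 10 → 0 < orient (p 0) (p i) (p j)) :
    Correct p initial := by
  have step : ∀ {A : ℕ} (i j : ℕ), Correct p A → 0 < i → j < 10 →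
      Correct p (bif i.blt j then Refutation.record A 0 i j else A) := by
    intro A i j hA hi hj
    cases h : i.blt j with
    | false => exact hA
    | true =>
      rw [Nat.blt_eq] at h
      exact hA.record (by norm_num) (by omega) hj (hp i j hi h hj)
  have inner : ∀ (L : List ℕ) {A : ℕ} (i : ℕ), Correct p A → 0 < i → (∀ x ∈ L, x < 10) →
      Correct p (L.foldr (fun j A => bif i.blt j then Refutation.record A 0 i j else A) A) := by
    intro L A i hA hi hL
    induction L with
    | nil => exact hA
    | cons j L ih =>
      rw [List.forall_mem_cons] at hL
      exact step i j (ih hL.2) hi hL.1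
  have outer : ∀ (M L : List ℕ), (∀ x ∈ M, 0 < x) → (∀ x ∈ L, x < 10) →
      Correct p (M.foldr (fun i A =>
        L.foldr (fun j A => bif i.blt j then Refutation.record A 0 i j else A) A) 0) := by
    intro M L hM hL
    induction M with
    | nil =>
      intro i j k _ _ _ h
      simp [ccw_eq_testBit] at h
    | cons i M ih =>
      rw [List.forall_mem_cons] at hM
      exact inner L i (ih hM.2) hM.1 hL
  exact outer _ _ (by simp) (by simp)

end Refutation

/-! ### The case distinction

The terms `tree1`, `tree2`, … are subtrees of `harborth`. The triples to branch on were selected by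
a computer search for a small tree. -/

namespace Refutation

def tree1 : Refutation :=
  split 1 3 6 (split 1 3 4 (split 1 3 7 (split 1 6 7 (split 3 5 6 (split 3 5 7 (split 3 4 7 (split
  1 4 7 (split 2 3 7 (split 2 4 7 (split 2 5 7 (split 2 6 7 (split 1 2 3 (split 1 2 4 (split 1 2 7
  (hole 1 7 4 3 2) (clash 2 1 3 0 7)) (clash 2 1 3 0 4)) (split 2 3 6 (split 2 5 6 (split 3 7 8
  (split 2 3 8 (split 2 7 8 (split 2 7 9 (split 2 8 9 (split 3 7 9 (split 3 8 9 (split 2 3 9 (hole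
  2 9 8 7 3) (clash 2 3 9 7 0)) (clash 8 7 9 0 3)) (clash 7 3 8 0 9)) (clash 8 7 9 0 2)) (clash 7
  2 8 0 9)) (clash 7 3 8 0 2)) (clash 3 2 7 0 8)) (split 4 7 8 (clash 7 4 8 0 3) (split 5 6 8
  (split 4 5 8 (split 4 6 8 (hole 4 7 8 6 5) (clash 6 5 8 0 4)) (clash 5 4 6 0 8)) (split 6 8 9
  (split 4 6 8 (split 4 6 9 (split 4 8 9 (split 4 7 9 (split 2 4 9 (split 2 7 9 (split 3 4 9
  (split 3 7 9 (split 2 3 9 (hole 2 9 7 4 3) (clash 2 3 9 4 0)) (clash 7 4 9 0 3)) (clash 4 3 7 0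
  9)) (clash 7 4 9 0 2)) (clash 4 2 7 0 9)) (hole 4 7 9 8 6)) (clash 8 6 9 0 4)) (clash 6 4 8 0
  9)) (split 3 4 8 (clash 4 3 8 0 6) (split 3 6 8 (clash 6 3 8 0 4) (split 2 4 6 (split 2 4 5
  (hole 2 7 6 5 4) (split 1 2 4 (split 1 2 6 (split 1 2 7 (split 1 4 6 (hole 1 7 6 4 2) (clash 4 2
  6 0 1)) (clash 2 1 4 0 7)) (clash 2 1 4 0 6)) (split 1 2 5 (clash 2 1 5 0 4) (split 1 4 5 (clash
  4 1 5 0 2) (split 2 3 5 (split 1 3 5 (hole 1 2 4 5 3) (split 3 5 8 (split 4 5 8 (hole 3 4 6 8 5)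
  (clash 8 3 4 5 0)) (split 1 3 8 (clash 3 1 8 0 5) (split 1 5 8 (clash 5 1 8 0 3) (hole 0 1 3 5
  8))))) (split 1 3 5 (clash 5 1 2 3 0) (hole 0 1 2 3 5))))))) (split 2 4 5 (clash 4 2 5 0 6)
  (split 2 3 5 (hole 2 4 6 5 3) (split 1 2 5 (clash 2 1 5 0 3) (split 1 3 5 (clash 3 1 5 0 2)
  (hole 0 1 2 3 5))))))))) (split 5 6 9 (clash 6 5 9 0 8) (split 5 8 9 (clash 8 5 9 0 6) (hole 0 5
  6 8 9))))))) (clash 6 2 5 3 0)) (clash 3 1 6 0 2))) (clash 7 2 6 3 0)) (clash 7 2 5 3 0)) (clash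
  4 3 7 0 2)) (clash 3 2 4 0 7)) (clash 7 1 4 3 0)) (hole 3 4 7 6 5)) (clash 5 3 6 0 7)) (split 1
  3 5 (split 5 6 8 (split 4 5 8 (split 4 6 8 (split 4 7 8 (split 4 7 9 (split 4 8 9 (split 2 4 7
  (split 2 4 8 (split 2 4 9 (split 2 7 8 (split 2 7 9 (split 2 8 9 (hole 2 9 8 7 4) (clash 8 4 9 0
  2)) (clash 7 4 9 0 2)) (clash 7 4 8 0 2)) (clash 4 2 7 0 9)) (clash 4 2 7 0 8)) (split 2 4 5
  (clash 4 2 5 0 7) (split 2 4 6 (clash 4 2 6 0 7) (split 3 4 7 (clash 4 3 7 0 2) (split 2 3 6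
  (split 2 3 5 (split 2 3 7 (split 2 6 7 (split 1 2 3 (split 1 2 4 (split 1 2 5 (split 1 4 5
  (split 1 4 6 (split 1 4 7 (split 1 5 6 (split 1 5 7 (hole 1 7 6 5 4) (clash 5 4 7 0 1)) (clash 5
  4 6 0 1)) (clash 4 1 5 0 7)) (clash 4 1 5 0 6)) (hole 1 4 5 3 2)) (clash 2 1 3 0 5)) (clash 2 1
  3 0 4)) (split 1 4 7 (split 1 4 8 (split 1 4 9 (split 1 7 8 (split 1 7 9 (split 1 8 9 (hole 1 9
  8 7 4) (clash 8 4 9 0 1)) (clash 7 4 9 0 1)) (clash 7 4 8 0 1)) (clash 4 1 7 0 9)) (clash 4 1 7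
  0 8)) (split 1 4 5 (clash 4 1 5 0 7) (split 2 5 6 (split 2 5 7 (hole 2 4 7 6 5) (clash 5 2 6 0
  7)) (split 3 5 7 (split 2 5 7 (hole 2 4 7 5 3) (clash 7 2 5 3 0)) (split 2 5 7 (split 1 2 6
  (split 1 2 4 (split 1 2 5 (split 1 2 7 (split 1 5 7 (hole 1 4 7 5 2) (clash 5 2 7 0 1)) (clash 2
  1 6 0 7)) (clash 2 1 6 0 5)) (clash 2 1 6 0 4)) (split 1 5 6 (clash 6 1 2 5 0) (split 1 5 7
  (split 1 2 5 (split 1 2 7 (split 1 2 4 (hole 1 4 7 5 2) (clash 2 1 5 0 4)) (clash 2 1 5 0 7))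
  (hole 1 2 5 6 3)) (hole 1 5 7 6 3)))) (hole 2 5 7 6 3))))))) (clash 6 3 7 0 2)) (clash 3 2 6 0
  7)) (clash 3 2 6 0 5)) (split 1 2 3 (split 1 2 4 (split 1 2 5 (split 2 5 6 (clash 6 2 3 5 0)
  (split 2 3 5 (split 1 4 5 (split 1 4 6 (split 1 4 7 (split 1 5 6 (split 1 5 7 (hole 1 7 6 5 4)
  (clash 5 4 7 0 1)) (clash 5 4 6 0 1)) (clash 4 1 5 0 7)) (clash 4 1 5 0 6)) (hole 1 4 5 3 2))
  (hole 0 2 3 5 6))) (clash 1 2 5 3 0)) (clash 2 1 3 0 4)) (clash 3 1 6 0 2))))))) (clash 8 7 9 0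
  4)) (clash 7 4 8 0 9)) (hole 4 7 8 6 5)) (clash 6 5 8 0 4)) (clash 5 4 6 0 8)) (split 3 5 8
  (clash 5 3 8 0 6) (split 3 6 8 (clash 6 3 8 0 5) (hole 0 3 5 6 8)))) (clash 3 1 6 0 5))) (clash
  6 3 7 0 1)) (clash 3 1 6 0 7)) (clash 3 1 6 0 4)) (split 1 4 6 (clash 6 1 3 4 0) (split 1 4 5
  (clash 4 1 5 0 6) (split 2 4 5 (split 2 4 6 (split 2 4 7 (split 2 5 6 (split 2 5 7 (split 2 6 7
  (hole 2 7 6 5 4) (clash 6 4 7 0 2)) (clash 5 4 7 0 2)) (clash 5 4 6 0 2)) (clash 4 2 5 0 7))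
  (clash 4 2 5 0 6)) (split 1 3 4 (split 3 5 6 (split 1 3 5 (clash 3 1 5 0 6) (split 3 5 7 (split
  3 4 7 (split 1 3 7 (split 1 4 7 (split 2 3 7 (split 2 4 7 (split 2 6 7 (split 1 2 3 (split 1 2 4
  (split 1 2 7 (hole 1 7 4 3 2) (clash 2 1 3 0 7)) (clash 2 1 3 0 4)) (split 1 2 5 (clash 1 2 3 5
  0) (split 2 3 5 (split 2 3 6 (split 2 5 6 (split 2 4 6 (split 1 2 4 (clash 4 2 6 0 1) (split 1 2
  7 (split 3 5 8 (split 2 3 8 (split 2 5 8 (split 4 5 8 (split 3 6 8 (split 2 6 8 (split 4 6 8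
  (split 2 4 8 (split 4 7 8 (split 2 7 8 (split 3 4 8 (split 3 7 8 (hole 2 8 7 4 3) (clash 7 4 8 0
  3)) (clash 4 3 7 0 8)) (clash 8 2 7 4 0)) (split 2 7 8 (split 2 7 9 (split 2 8 9 (split 1 2 8
  (split 1 2 9 (split 1 7 8 (split 1 7 9 (split 1 8 9 (hole 1 9 8 7 2) (clash 8 2 9 0 1)) (clash 7
  2 9 0 1)) (clash 7 2 8 0 1)) (clash 2 1 7 0 9)) (clash 2 1 7 0 8)) (clash 8 7 9 0 2)) (clash 7 2
  8 0 9)) (hole 2 7 8 6 4))) (clash 2 4 8 6 0)) (clash 6 3 8 0 4)) (clash 8 2 6 3 0)) (split 1 3 8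
  (clash 3 1 8 0 6) (split 1 4 8 (clash 1 3 8 4 0) (split 1 7 8 (clash 1 3 8 7 0) (split 2 7 8
  (clash 7 2 8 0 1) (split 3 4 8 (clash 3 4 6 8 0) (split 4 7 8 (clash 4 1 7 0 8) (split 5 6 8
  (clash 8 3 6 5 0) (split 2 4 8 (split 4 6 8 (split 2 6 8 (hole 2 7 8 6 4) (clash 8 2 6 4 0))
  (hole 3 4 6 8 5)) (hole 2 4 8 5 3)))))))))) (clash 5 3 8 0 4)) (clash 5 3 8 0 2)) (clash 3 2 5 0
  8)) (split 1 3 8 (clash 3 1 8 0 5) (split 1 5 8 (clash 5 1 8 0 3) (hole 0 1 3 5 8)))) (hole 1 2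
  7 4 3))) (hole 2 4 6 5 3)) (clash 5 3 6 0 2)) (clash 3 2 5 0 6)) (hole 0 1 2 3 5)))) (clash 7 2
  6 3 0)) (clash 4 3 7 0 2)) (clash 3 2 4 0 7)) (clash 4 3 7 0 1)) (clash 3 1 4 0 7)) (hole 3 4 7
  6 5)) (clash 5 3 6 0 7))) (split 1 5 6 (clash 6 1 3 5 0) (split 1 2 3 (split 1 2 4 (split 2 3 6
  (clash 3 2 6 0 1) (split 2 5 6 (clash 6 2 3 5 0) (split 2 3 5 (split 1 2 5 (split 1 3 5 (hole 1
  4 5 3 2) (clash 3 2 5 0 1)) (clash 2 1 3 0 5)) (hole 0 2 3 5 6)))) (clash 2 1 3 0 4)) (split 1 2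
  6 (clash 1 2 3 6 0) (split 1 3 5 (split 2 3 5 (split 2 3 6 (split 2 3 7 (split 5 6 8 (split 4 5
  8 (split 4 6 8 (split 4 7 8 (split 4 7 9 (split 4 8 9 (split 2 4 7 (split 2 4 8 (split 2 4 9
  (split 2 7 8 (split 2 7 9 (split 2 8 9 (hole 2 9 8 7 4) (clash 8 4 9 0 2)) (clash 7 4 9 0 2))
  (clash 7 4 8 0 2)) (clash 4 2 7 0 9)) (clash 4 2 7 0 8)) (split 3 4 7 (clash 7 2 4 3 0) (split 3
  5 7 (split 2 5 7 (hole 2 4 7 5 3) (clash 7 2 5 3 0)) (split 3 5 8 (clash 5 3 8 0 7) (split 3 7 8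
  (clash 7 3 8 0 5) (split 3 6 8 (hole 3 5 7 8 6) (split 1 3 8 (clash 3 1 8 0 6) (split 1 6 8
  (clash 6 1 8 0 3) (hole 0 1 3 6 8))))))))) (clash 8 7 9 0 4)) (clash 7 4 8 0 9)) (hole 4 7 8 6
  5)) (clash 6 5 8 0 4)) (clash 5 4 6 0 8)) (split 3 5 8 (clash 5 3 8 0 6) (split 3 6 8 (clash 6 3
  8 0 5) (hole 0 3 5 6 8)))) (clash 3 2 6 0 7)) (hole 0 1 2 3 6)) (clash 3 1 5 0 2)) (hole 0 1 3 5
  6)))))) (split 1 3 5 (clash 3 1 5 0 4) (hole 0 1 3 4 5))))))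

def tree2 : Refutation :=
  split 6 7 9 (split 4 6 9 (split 4 7 9 (split 2 4 6 (split 2 4 7 (split 2 4 8 (split 2 6 7 (split
  2 6 8 (split 2 7 8 (hole 2 8 7 6 4) (clash 7 4 8 0 2)) (clash 6 4 8 0 2)) (clash 6 4 7 0 2))
  (clash 4 2 6 0 8)) (clash 4 2 6 0 7)) (split 2 4 5 (clash 4 2 5 0 6) (split 2 3 5 (split 2 3 4
  (split 2 3 6 (hole 2 4 6 5 3) (clash 3 2 5 0 6)) (clash 3 2 5 0 4)) (split 2 3 4 (split 1 2 3
  (split 1 2 4 (split 1 3 4 (split 2 4 7 (split 1 2 7 (split 1 4 7 (split 1 4 8 (split 1 7 8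
  (split 2 4 8 (split 2 7 8 (split 1 2 8 (hole 1 8 7 4 2) (clash 1 2 8 4 0)) (clash 7 4 8 0 2))
  (clash 4 2 7 0 8)) (clash 7 4 8 0 1)) (clash 4 1 7 0 8)) (clash 4 2 7 0 1)) (clash 2 1 4 0 7))
  (split 3 4 7 (clash 4 3 7 0 2) (split 2 3 6 (split 1 2 6 (split 1 3 6 (split 1 4 6 (split 1 4 7
  (split 1 4 8 (split 1 6 7 (split 1 6 8 (split 1 7 8 (hole 1 8 7 6 4) (clash 7 4 8 0 1)) (clash 6
  4 8 0 1)) (clash 6 4 7 0 1)) (clash 4 1 6 0 8)) (clash 4 1 6 0 7)) (hole 1 4 6 3 2)) (clash 3 2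
  6 0 1)) (clash 2 1 3 0 6)) (split 2 3 7 (split 1 2 7 (split 1 3 7 (split 1 4 7 (split 1 4 8
  (split 2 6 7 (split 2 6 8 (split 2 7 8 (split 3 6 7 (split 3 6 8 (split 3 7 8 (split 1 2 8
  (split 1 3 8 (split 2 3 8 (split 3 4 8 (split 2 4 8 (hole 1 8 4 3 2) (clash 8 2 4 3 0)) (hole 3
  4 8 7 6)) (clash 2 3 8 7 0)) (clash 1 3 8 4 0)) (clash 1 2 8 4 0)) (clash 7 6 8 0 3)) (clash 6 2
  8 0 3)) (clash 3 2 7 0 6)) (clash 7 6 8 0 2)) (clash 6 2 7 0 8)) (clash 2 3 6 7 0)) (clash 4 1 7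
  0 8)) (hole 1 4 7 3 2)) (clash 3 2 7 0 1)) (clash 2 1 3 0 7)) (split 3 5 7 (split 7 8 9 (split 4
  8 9 (split 6 8 9 (hole 4 9 8 7 6) (clash 9 6 8 7 0)) (clash 9 4 8 7 0)) (split 5 7 8 (split 3 5
  8 (split 3 7 8 (split 2 6 7 (split 2 6 8 (split 2 7 8 (split 3 6 7 (split 3 6 8 (split 2 3 8
  (split 3 4 8 (split 1 2 8 (split 1 3 8 (split 1 4 8 (split 2 4 8 (hole 1 8 4 3 2) (clash 8 2 4 3
  0)) (clash 4 3 8 0 1)) (clash 3 2 8 0 1)) (clash 2 1 3 0 8)) (hole 3 4 8 7 6)) (hole 2 3 8 7 6))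
  (clash 6 2 8 0 3)) (clash 7 2 3 6 0)) (clash 7 6 8 0 2)) (clash 6 2 7 0 8)) (split 2 5 7 (split
  3 6 7 (split 3 6 8 (split 3 4 8 (split 1 3 8 (split 1 4 8 (split 2 3 8 (split 2 4 8 (split 1 2 8
  (hole 1 8 4 3 2) (clash 1 2 8 3 0)) (clash 4 3 8 0 2)) (clash 3 2 4 0 8)) (clash 4 3 8 0 1))
  (clash 3 1 4 0 8)) (hole 3 4 8 7 6)) (clash 6 3 7 0 8)) (hole 2 3 6 7 5)) (split 5 6 8 (split 2
  5 8 (split 2 6 8 (split 3 6 8 (split 2 3 8 (split 3 4 8 (split 1 2 8 (split 1 3 8 (split 1 4 8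
  (split 2 4 8 (hole 1 8 4 3 2) (clash 8 2 4 3 0)) (clash 4 3 8 0 1)) (clash 3 2 8 0 1)) (clash 2
  1 3 0 8)) (hole 3 4 8 6 5)) (hole 2 3 8 6 5)) (clash 8 3 6 5 0)) (clash 6 5 8 0 2)) (clash 5 2 6
  0 8)) (split 6 8 9 (split 4 8 9 (split 2 3 8 (split 1 2 8 (split 1 3 8 (split 2 6 8 (split 2 6 9
  (split 2 8 9 (split 3 6 8 (split 3 6 9 (split 3 8 9 (split 1 2 9 (split 1 3 9 (split 1 8 9
  (split 2 3 9 (split 3 4 8 (hole 1 9 8 3 2) (split 3 4 9 (split 1 4 9 (split 2 4 9 (hole 1 9 4 3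
  2) (clash 9 2 4 3 0)) (clash 9 1 4 3 0)) (hole 3 4 9 8 6))) (clash 2 3 9 8 0)) (clash 8 2 9 0
  1)) (clash 3 1 8 0 9)) (clash 2 1 8 0 9)) (clash 8 6 9 0 3)) (clash 6 2 9 0 3)) (clash 3 2 8 0
  6)) (clash 8 6 9 0 2)) (clash 6 2 8 0 9)) (clash 2 3 6 8 0)) (clash 3 2 8 0 1)) (clash 2 1 3 0
  8)) (split 3 4 8 (clash 3 2 4 0 8) (split 3 6 8 (split 3 6 9 (split 3 8 9 (split 3 4 9 (split 1
  3 9 (split 1 4 9 (split 2 3 9 (split 2 4 9 (split 1 2 9 (hole 1 9 4 3 2) (clash 1 2 9 3 0))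
  (clash 4 3 9 0 2)) (clash 3 2 4 0 9)) (clash 4 3 9 0 1)) (clash 3 1 4 0 9)) (hole 3 4 9 8 6))
  (clash 8 6 9 0 3)) (clash 6 3 8 0 9)) (split 3 6 7 (clash 6 3 7 0 8) (hole 3 6 8 7 5))))) (clash
  9 4 8 6 0)) (split 5 6 9 (clash 6 5 9 0 8) (split 5 8 9 (clash 8 5 9 0 6) (split 5 7 9 (hole 5 6
  8 9 7) (split 2 5 9 (clash 5 2 9 0 7) (split 2 7 9 (clash 7 2 9 0 5) (hole 0 2 5 7 9))))))))))
  (clash 7 5 8 0 3)) (clash 5 3 7 0 8)) (split 5 7 9 (clash 7 5 9 0 8) (split 5 8 9 (clash 8 5 9 0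
  7) (hole 0 5 7 8 9))))) (split 2 5 7 (clash 7 2 3 5 0) (hole 0 2 3 5 7))))))) (clash 3 2 4 0 1))
  (clash 2 1 3 0 4)) (split 1 2 5 (clash 2 1 5 0 3) (split 1 3 5 (clash 3 1 5 0 2) (hole 0 1 2 3
  5)))) (hole 0 2 3 4 5))))) (clash 7 6 9 0 4)) (clash 6 4 7 0 9)) (split 5 6 9 (clash 6 5 9 0 7)
  (split 5 7 9 (clash 7 5 9 0 6) (hole 0 5 6 7 9)))

def tree3 : Refutation :=
  split 1 3 4 (split 1 3 5 (split 1 3 6 (split 1 4 5 (split 1 4 6 (split 1 5 6 (hole 1 6 5 4 3)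
  (clash 5 3 6 0 1)) (clash 4 3 6 0 1)) (clash 4 3 5 0 1)) (clash 3 1 4 0 6)) (clash 3 1 4 0 5))
  (split 2 3 5 (split 1 2 5 (split 1 2 6 (split 1 3 5 (split 1 3 6 (split 1 5 6 (split 2 3 6 (hole
  1 6 5 3 2) (clash 3 2 5 0 6)) (clash 5 2 6 0 1)) (clash 3 1 5 0 6)) (clash 3 2 5 0 1)) (clash 2
  1 5 0 6)) (clash 2 1 3 0 5)) (split 3 4 7 (split 3 4 8 (split 4 5 7 (split 3 5 7 (split 3 6 7
  (split 3 6 8 (split 3 6 9 (split 3 7 8 (split 3 7 9 (split 5 7 8 (split 4 5 8 (split 4 7 8 (hole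
  4 6 8 7 5) (clash 7 5 8 0 4)) (clash 5 4 7 0 8)) (split 7 8 9 (split 3 8 9 (split 6 8 9 (hole 3
  9 8 7 6) (clash 9 6 8 7 0)) (clash 9 3 8 7 0)) (split 5 7 9 (clash 7 5 9 0 8) (split 5 8 9
  (clash 8 5 9 0 7) (hole 0 5 7 8 9))))) (clash 7 6 9 0 3)) (clash 7 6 8 0 3)) (clash 6 3 7 0 9))
  (clash 6 3 7 0 8)) (hole 3 6 7 5 4)) (clash 7 3 5 4 0)) (split 2 4 5 (split 2 4 6 (split 2 3 6
  (split 1 2 6 (split 1 3 6 (split 1 5 6 (split 5 7 8 (split 7 8 9 (split 5 7 9 (split 5 8 9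
  (split 6 8 9 (split 5 6 9 (split 1 6 9 (split 2 6 9 (split 3 6 9 (split 1 2 9 (split 1 3 9
  (split 2 3 9 (hole 1 9 6 3 2) (clash 2 3 9 6 0)) (clash 1 3 9 6 0)) (clash 1 2 9 6 0)) (clash 6
  5 9 0 3)) (clash 6 5 9 0 2)) (clash 6 5 9 0 1)) (hole 5 6 9 8 7)) (clash 9 6 8 7 0)) (clash 8 7
  9 0 5)) (clash 7 5 8 0 9)) (split 4 7 8 (split 3 7 8 (split 6 8 9 (split 2 3 7 (split 1 2 7
  (split 1 3 7 (split 1 3 8 (split 1 7 8 (split 2 3 8 (split 2 7 8 (split 3 5 7 (split 3 5 8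
  (split 1 2 8 (split 1 6 8 (split 1 6 9 (split 1 8 9 (split 3 6 7 (hole 1 8 7 3 2) (split 3 6 8
  (split 3 6 9 (split 3 8 9 (split 1 3 9 (hole 1 9 8 6 3) (clash 1 3 9 6 0)) (clash 8 6 9 0 3))
  (clash 6 3 8 0 9)) (hole 3 6 8 7 5))) (clash 8 6 9 0 1)) (clash 6 1 8 0 9)) (hole 1 8 7 3 2))
  (clash 1 2 8 3 0)) (clash 3 2 8 0 5)) (clash 3 2 7 0 5)) (clash 7 3 8 0 2)) (clash 3 2 7 0 8))
  (clash 7 3 8 0 1)) (clash 3 1 7 0 8)) (clash 3 2 7 0 1)) (clash 2 1 3 0 7)) (split 3 6 7 (clash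
  3 2 6 0 7) (split 3 5 7 (split 3 5 8 (split 3 6 8 (split 3 6 9 (split 3 8 9 (split 1 3 8 (split
  1 3 9 (split 1 6 8 (split 1 6 9 (split 1 8 9 (hole 1 9 8 6 3) (clash 8 3 9 0 1)) (clash 6 3 9 0
  1)) (clash 6 3 8 0 1)) (clash 3 1 6 0 9)) (clash 3 1 6 0 8)) (clash 8 6 9 0 3)) (clash 6 3 8 0
  9)) (hole 3 6 8 7 5)) (clash 5 3 7 0 8)) (split 2 5 7 (clash 7 2 3 5 0) (split 2 4 7 (hole 2 3 5
  7 4) (split 1 2 4 (split 1 2 5 (split 1 4 5 (split 1 3 5 (split 3 5 8 (split 1 3 8 (split 1 5 8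
  (split 1 2 8 (split 3 6 8 (split 1 6 8 (split 2 3 8 (split 2 6 8 (hole 1 8 6 3 2) (clash 6 3 8 0
  2)) (clash 3 2 6 0 8)) (clash 8 1 6 3 0)) (split 1 6 8 (split 1 6 9 (split 4 5 8 (hole 3 6 8 5
  4) (split 1 2 9 (split 1 3 9 (split 1 5 9 (split 4 7 9 (split 5 7 9 (split 5 8 9 (split 3 5 9
  (split 3 8 9 (split 5 6 9 (split 3 6 9 (hole 1 9 6 5 3) (clash 9 3 6 5 0)) (split 3 6 9 (split 2
  3 9 (split 2 6 9 (hole 1 9 6 3 2) (clash 6 3 9 0 2)) (clash 3 2 6 0 9)) (hole 3 6 9 8 5)))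
  (clash 8 5 9 0 3)) (clash 5 3 8 0 9)) (split 4 5 9 (clash 5 4 9 0 8) (split 4 8 9 (clash 8 4 9 0
  5) (hole 4 5 8 9 7)))) (clash 7 4 9 0 5)) (split 2 4 9 (clash 4 2 9 0 7) (split 2 7 9 (clash 7 2
  9 0 4) (hole 0 2 4 7 9)))) (clash 1 5 9 6 0)) (clash 1 3 9 6 0)) (clash 1 2 9 6 0))) (clash 6 1
  8 0 9)) (hole 1 6 8 5 3))) (clash 1 2 8 3 0)) (clash 5 3 8 0 1)) (clash 3 1 5 0 8)) (split 4 5 8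
  (clash 8 3 5 4 0) (hole 3 5 8 7 4))) (hole 1 3 5 4 2)) (clash 4 2 5 0 1)) (clash 2 1 4 0 5))
  (split 1 2 7 (clash 2 1 7 0 4) (split 1 4 7 (clash 4 1 7 0 2) (hole 0 1 2 4 7))))))))) (split 5
  6 9 (clash 6 5 9 0 8) (split 5 8 9 (clash 8 5 9 0 6) (split 5 7 9 (hole 5 6 8 9 7) (split 4 5 9
  (clash 5 4 9 0 7) (split 4 7 9 (clash 7 4 9 0 5) (hole 0 4 5 7 9))))))) (clash 8 3 7 4 0))
  (split 4 7 9 (clash 7 4 9 0 8) (split 4 8 9 (clash 8 4 9 0 7) (hole 0 4 7 8 9))))) (split 4 5 8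
  (clash 5 4 8 0 7) (split 4 7 8 (clash 7 4 8 0 5) (hole 0 4 5 7 8)))) (clash 6 1 5 2 0)) (clash 3
  2 6 0 1)) (clash 2 1 3 0 6)) (hole 2 3 6 5 4)) (clash 4 2 5 0 6)) (split 2 4 7 (clash 4 2 7 0 5)
  (split 2 5 7 (clash 5 2 7 0 4) (hole 0 2 4 5 7))))) (split 2 3 8 (clash 3 2 8 0 4) (split 2 4 8
  (clash 4 2 8 0 3) (hole 0 2 3 4 8)))) (split 2 3 7 (clash 3 2 7 0 4) (split 2 4 7 (clash 4 2 7 0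
  3) (hole 0 2 3 4 7)))))

def tree4 : Refutation :=
  split 4 6 8 (split 4 5 8 (split 4 7 8 (split 3 4 6 (split 3 4 8 (split 3 5 8 (split 3 6 8 (split
  3 7 8 (split 2 3 4 (split 2 3 6 (split 2 3 8 (split 2 4 6 (split 2 4 8 (split 2 6 8 (hole 2 8 6
  4 3) (clash 6 3 8 0 2)) (clash 4 3 8 0 2)) (clash 4 3 6 0 2)) (clash 3 2 4 0 8)) (clash 3 2 4 0
  6)) (split 3 4 5 (split 5 6 8 (hole 3 8 6 5 4) (split 1 2 3 (split 6 8 9 (split 3 6 9 (split 3 8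
  9 (split 4 6 9 (split 4 8 9 (split 3 4 9 (hole 3 9 8 6 4) (clash 3 4 9 6 0)) (clash 8 6 9 0 4))
  (clash 6 4 8 0 9)) (clash 8 6 9 0 3)) (clash 6 3 8 0 9)) (split 5 6 9 (clash 6 5 9 0 8) (split 5
  8 9 (clash 8 5 9 0 6) (split 7 8 9 (clash 8 7 9 0 6) (split 2 3 6 (split 1 2 6 (split 1 3 6
  (split 1 3 8 (split 1 6 8 (split 2 3 8 (split 2 6 8 (split 1 2 8 (hole 1 8 6 3 2) (clash 1 2 8 3
  0)) (clash 6 3 8 0 2)) (clash 3 2 6 0 8)) (clash 6 3 8 0 1)) (clash 3 1 6 0 8)) (clash 3 2 6 0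
  1)) (clash 2 1 3 0 6)) (split 2 3 5 (clash 3 2 5 0 6) (split 2 4 6 (split 2 4 5 (hole 2 3 6 5 4)
  (split 2 4 8 (split 2 6 8 (split 2 3 8 (split 1 2 8 (split 1 3 8 (split 4 5 7 (split 3 4 7
  (split 3 5 7 (split 3 6 7 (split 6 7 9 (split 3 6 9 (split 3 7 9 (split 3 8 9 (split 1 3 9
  (split 1 8 9 (split 2 3 9 (split 2 8 9 (split 1 2 9 (hole 1 9 8 3 2) (clash 1 2 9 3 0)) (clash 8
  3 9 0 2)) (clash 3 2 8 0 9)) (clash 8 3 9 0 1)) (clash 3 1 8 0 9)) (hole 3 8 9 7 6)) (clash 7 6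
  9 0 3)) (clash 6 3 7 0 9)) (split 5 7 9 (clash 9 5 6 7 0) (hole 0 5 6 7 9))) (hole 3 6 7 5 4))
  (clash 5 4 7 0 3)) (clash 4 3 5 0 7)) (split 2 4 7 (clash 4 2 7 0 5) (split 2 5 7 (clash 5 2 7 0
  4) (hole 0 2 4 5 7)))) (clash 3 2 8 0 1)) (clash 2 1 3 0 8)) (hole 2 3 8 6 4)) (clash 6 4 8 0
  2)) (clash 4 2 6 0 8))) (split 2 4 5 (clash 4 2 5 0 6) (split 2 4 7 (clash 4 2 7 0 6) (split 2 6
  7 (clash 6 2 7 0 4) (split 4 5 7 (split 2 5 7 (hole 2 4 6 7 5) (split 6 7 9 (split 5 7 8 (split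
  5 7 9 (hole 5 6 8 9 7) (split 2 5 9 (clash 5 2 9 0 7) (split 2 7 9 (clash 7 2 9 0 5) (hole 0 2 5
  7 9)))) (split 2 5 8 (clash 5 2 8 0 7) (split 2 7 8 (clash 7 2 8 0 5) (hole 0 2 5 7 8)))) (split
  5 7 9 (clash 9 5 6 7 0) (hole 0 5 6 7 9)))) (split 2 5 7 (clash 7 2 4 5 0) (hole 0 2 4 5
  7))))))))))))) (split 1 2 4 (clash 2 1 4 0 3) (split 1 3 4 (clash 3 1 4 0 2) (hole 0 1 2 3
  4))))) (split 2 3 5 (clash 3 2 5 0 4) (split 2 4 5 (clash 4 2 5 0 3) (hole 0 2 3 4 5))))) (clash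
  8 3 7 4 0)) (clash 6 4 8 0 3)) (clash 8 3 5 4 0)) (clash 4 3 6 0 8)) (split 3 4 5 (clash 4 3 5 0
  6) (split 3 4 7 (clash 4 3 7 0 6) (split 3 6 7 (clash 6 3 7 0 4) (split 4 5 7 (split 3 5 7 (hole
  3 4 6 7 5) (split 2 3 5 (split 2 3 4 (split 2 3 6 (split 2 4 6 (split 2 4 8 (split 2 5 8 (split
  2 6 8 (split 1 2 4 (split 1 2 6 (split 1 2 8 (split 1 4 6 (split 1 4 8 (split 1 6 8 (hole 1 8 6
  4 2) (clash 6 2 8 0 1)) (clash 4 2 8 0 1)) (clash 4 2 6 0 1)) (clash 2 1 4 0 8)) (clash 2 1 4 0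
  6)) (split 1 2 3 (clash 2 1 3 0 4) (split 6 8 9 (split 2 6 9 (split 2 8 9 (split 4 6 9 (split 4
  8 9 (split 2 4 9 (hole 2 9 8 6 4) (clash 2 4 9 6 0)) (clash 8 6 9 0 4)) (clash 6 4 8 0 9))
  (clash 8 6 9 0 2)) (clash 6 2 8 0 9)) (split 7 8 9 (clash 8 7 9 0 6) (split 4 7 9 (split 6 7 9
  (split 1 3 4 (split 2 4 5 (split 5 6 8 (hole 2 8 6 5 4) (split 5 6 9 (clash 6 5 9 0 8) (split 5
  8 9 (clash 8 5 9 0 6) (split 5 7 8 (split 5 7 9 (hole 5 6 8 9 7) (split 3 5 9 (clash 5 3 9 0 7)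
  (split 3 7 9 (clash 7 3 9 0 5) (hole 0 3 5 7 9)))) (split 3 5 8 (clash 5 3 8 0 7) (split 3 7 8
  (clash 7 3 8 0 5) (hole 0 3 5 7 8))))))) (split 1 2 5 (clash 2 1 5 0 4) (split 1 4 5 (clash 4 1
  5 0 2) (split 1 3 5 (hole 1 2 4 5 3) (split 1 3 7 (clash 3 1 7 0 5) (split 1 5 7 (clash 5 1 7 0
  3) (hole 0 1 3 5 7))))))) (split 1 3 5 (clash 3 1 5 0 4) (split 1 4 5 (clash 4 1 5 0 3) (hole 0
  1 3 4 5)))) (clash 7 4 9 0 6)) (split 3 7 9 (clash 7 3 9 0 4) (split 5 7 9 (clash 7 5 9 0 4)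
  (split 3 5 9 (clash 3 5 7 9 0) (hole 0 3 5 7 9))))))))) (clash 6 4 8 0 2)) (clash 8 2 5 4 0))
  (clash 4 2 6 0 8)) (split 2 4 5 (clash 4 2 5 0 6) (hole 2 4 6 5 3))) (clash 3 2 5 0 6)) (clash 3
  2 5 0 4)) (split 2 3 7 (clash 3 2 7 0 5) (split 2 5 7 (clash 5 2 7 0 3) (hole 0 2 3 5 7)))))
  (split 3 5 7 (clash 7 3 4 5 0) (hole 0 3 4 5 7))))))) (clash 8 4 7 6 0)) (clash 4 5 8 6 0))
  (split 5 6 8 (clash 6 5 8 0 4) (split 6 7 9 (split 3 4 6 (split 2 3 4 (split 2 3 6 (split 2 4 6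
  (split 3 4 5 (split 2 3 5 (split 2 4 5 (hole 2 6 5 4 3) (clash 4 3 5 0 2)) (clash 3 2 4 0 5))
  (split 4 5 7 (split 1 3 4 (split 1 3 6 (split 1 4 6 (split 1 2 3 (split 1 2 4 (split 1 2 6 (hole
  1 6 4 3 2) (clash 2 1 3 0 6)) (clash 2 1 3 0 4)) (split 2 3 5 (split 5 7 8 (split 4 5 8 (split 4
  7 8 (hole 4 6 8 7 5) (clash 7 5 8 0 4)) (clash 5 4 7 0 8)) (split 3 5 7 (split 2 3 7 (split 2 5
  7 (split 7 8 9 (split 6 8 9 (split 3 6 8 (split 2 3 8 (split 2 6 8 (split 2 6 9 (split 2 8 9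
  (split 3 6 9 (split 3 8 9 (split 2 3 9 (hole 2 9 8 6 3) (clash 2 3 9 6 0)) (clash 8 6 9 0 3))
  (clash 6 3 8 0 9)) (clash 8 6 9 0 2)) (clash 6 2 8 0 9)) (clash 6 3 8 0 2)) (clash 3 2 6 0 8))
  (split 3 6 7 (clash 6 3 7 0 8) (split 4 7 8 (split 4 7 9 (split 4 8 9 (split 4 6 9 (split 2 4 9
  (split 2 6 9 (split 3 4 9 (split 3 6 9 (split 2 3 9 (hole 2 9 6 4 3) (clash 2 3 9 4 0)) (clash 6
  4 9 0 3)) (clash 4 3 6 0 9)) (clash 6 4 9 0 2)) (clash 4 2 6 0 9)) (hole 4 6 9 8 7)) (clash 8 7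
  9 0 4)) (clash 7 4 8 0 9)) (split 3 4 7 (split 2 4 7 (split 2 6 7 (split 2 6 8 (split 2 6 9
  (split 2 7 8 (split 2 7 9 (split 2 8 9 (hole 2 9 8 7 6) (clash 8 6 9 0 2)) (clash 7 6 9 0 2))
  (clash 7 6 8 0 2)) (clash 6 2 7 0 9)) (clash 6 2 7 0 8)) (hole 2 6 7 4 3)) (clash 7 2 4 3 0))
  (split 3 4 8 (clash 4 3 8 0 7) (split 3 7 8 (clash 7 3 8 0 4) (split 2 4 5 (split 2 4 7 (split 2
  6 7 (split 2 6 8 (split 2 6 9 (split 2 7 8 (split 2 7 9 (split 2 8 9 (hole 2 9 8 7 6) (clash 8 6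
  9 0 2)) (clash 7 6 9 0 2)) (clash 7 6 8 0 2)) (clash 6 2 7 0 9)) (clash 6 2 7 0 8)) (hole 2 6 7
  5 4)) (clash 4 2 5 0 7)) (split 2 4 7 (split 3 5 8 (split 4 5 8 (hole 3 4 7 8 5) (clash 8 3 4 5
  0)) (split 1 2 4 (split 1 2 6 (split 1 2 7 (split 1 4 7 (split 2 6 7 (split 1 6 7 (split 1 6 8
  (split 1 6 9 (split 1 7 8 (split 1 7 9 (split 1 8 9 (hole 1 9 8 7 6) (clash 8 6 9 0 1)) (clash 7
  6 9 0 1)) (clash 7 6 8 0 1)) (clash 6 1 7 0 9)) (clash 6 1 7 0 8)) (clash 7 1 6 2 0)) (split 1 6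
  7 (split 1 6 8 (split 1 6 9 (split 1 7 8 (split 1 7 9 (split 1 8 9 (hole 1 9 8 7 6) (clash 8 6 9
  0 1)) (clash 7 6 9 0 1)) (clash 7 6 8 0 1)) (clash 6 1 7 0 9)) (clash 6 1 7 0 8)) (hole 1 6 7 4
  2))) (clash 4 2 7 0 1)) (clash 2 1 4 0 7)) (clash 2 1 4 0 6)) (split 1 2 5 (clash 2 1 5 0 4)
  (split 1 4 5 (clash 4 1 5 0 2) (split 1 3 5 (hole 1 2 4 5 3) (split 1 3 8 (clash 3 1 8 0 5)
  (split 1 5 8 (clash 5 1 8 0 3) (hole 0 1 3 5 8)))))))) (hole 2 4 7 5 3))))))))) (clash 9 6 8 7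
  0)) (split 5 7 9 (clash 7 5 9 0 8) (split 5 8 9 (clash 8 5 9 0 7) (hole 0 5 7 8 9)))) (clash 5 3
  7 0 2)) (clash 3 2 5 0 7)) (split 3 5 8 (clash 5 3 8 0 7) (split 3 7 8 (clash 7 3 8 0 5) (hole 0
  3 5 7 8))))) (split 1 2 5 (clash 2 1 5 0 3) (split 1 3 5 (clash 3 1 5 0 2) (hole 0 1 2 3 5)))))
  (clash 4 3 6 0 1)) (clash 3 1 4 0 6)) (split 1 3 5 (clash 3 1 5 0 4) (split 1 4 5 (clash 4 1 5 0
  3) (hole 0 1 3 4 5)))) (split 3 4 7 (clash 4 3 7 0 5) (split 3 5 7 (clash 5 3 7 0 4) (hole 0 3 4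
  5 7))))) (clash 4 3 6 0 2)) (clash 3 2 4 0 6)) (split 3 4 5 (split 1 2 3 tree3 (split 1 2 4
  (clash 2 1 4 0 3) (split 1 3 4 (clash 3 1 4 0 2) (hole 0 1 2 3 4)))) (split 2 3 5 (clash 3 2 5 0
  4) (split 2 4 5 (clash 4 2 5 0 3) (hole 0 2 3 4 5))))) (split 3 4 5 (clash 4 3 5 0 6) (split 3 4
  7 (clash 4 3 7 0 6) (split 3 4 8 (clash 4 3 8 0 6) (split 3 6 7 (clash 6 3 7 0 4) (split 4 5 7
  (split 3 5 7 (hole 3 4 6 7 5) (split 4 7 8 (split 4 5 8 (split 5 7 8 (hole 4 6 8 7 5) (split 3 5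
  8 (clash 5 3 8 0 7) (split 3 7 8 (clash 7 3 8 0 5) (hole 0 3 5 7 8)))) (clash 4 5 8 7 0)) (split
  3 7 8 (clash 8 3 4 7 0) (split 5 7 8 (clash 7 5 8 0 4) (split 3 5 8 (clash 3 5 7 8 0) (hole 0 3
  5 7 8)))))) (split 3 5 7 (clash 7 3 4 5 0) (hole 0 3 4 5 7)))))))) (split 5 6 9 (clash 6 5 9 0
  7) (split 5 7 9 (clash 7 5 9 0 6) (hole 0 5 6 7 9)))))

def tree5 : Refutation :=
  split 7 8 9 (split 5 7 9 (split 5 8 9 (split 5 6 9 (split 6 7 8 (split 6 7 9 (split 6 8 9 (hole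
  5 9 8 7 6) (clash 8 7 9 0 6)) (clash 7 6 8 0 9)) (split 4 6 7 (split 2 4 6 (split 2 4 7 (split 2
  6 7 (split 3 4 6 (split 3 4 7 (split 3 6 7 (hole 3 5 7 6 4) (clash 6 4 7 0 3)) (clash 4 3 6 0
  7)) (hole 2 5 7 6 4)) (clash 6 4 7 0 2)) (clash 4 2 6 0 7)) (split 2 3 4 (split 3 4 6 (clash 4 3
  6 0 2) (split 1 3 4 (split 1 3 5 (split 1 4 5 (split 1 2 3 (split 1 2 4 (split 1 2 5 (hole 1 5 4
  3 2) (clash 2 1 3 0 5)) (clash 2 1 3 0 4)) (split 2 3 6 (split 3 7 8 (split 3 6 7 (split 3 6 8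
  (split 2 3 7 (split 2 3 8 (split 2 6 7 (split 2 7 8 (split 3 4 7 (hole 2 5 8 7 3) (split 4 7 8
  (split 2 4 7 (split 2 4 8 (hole 2 5 8 7 4) (clash 4 2 7 0 8)) (hole 2 4 7 6 3)) (clash 7 3 8 0
  4))) (clash 7 3 8 0 2)) (clash 6 3 7 0 2)) (clash 3 2 6 0 8)) (clash 3 2 6 0 7)) (clash 8 3 6 7
  0)) (clash 7 3 8 0 6)) (split 2 3 8 (split 2 3 7 (split 3 6 7 (split 2 6 7 (split 2 4 7 (split 3
  4 7 (hole 2 5 7 4 3) (split 3 4 8 (clash 3 4 7 8 0) (split 1 2 6 (split 1 2 4 (split 1 2 5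
  (split 1 2 7 (split 1 4 7 (split 1 5 7 (split 1 5 8 (split 1 5 9 (split 1 7 8 (split 1 7 9
  (split 1 8 9 (hole 1 9 8 7 5) (clash 8 5 9 0 1)) (clash 7 5 9 0 1)) (clash 7 5 8 0 1)) (clash 5
  1 7 0 9)) (clash 5 1 7 0 8)) (hole 1 5 7 4 2)) (clash 4 2 7 0 1)) (clash 2 1 6 0 7)) (clash 2 1
  6 0 5)) (clash 2 1 6 0 4)) (split 1 4 6 (clash 6 1 2 4 0) (split 3 6 8 (split 4 6 8 (split 4 7 8
  (split 2 4 8 (split 2 7 8 (hole 2 5 8 7 4) (clash 7 4 8 0 2)) (clash 4 2 7 0 8)) (hole 3 4 7 8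
  6)) (clash 8 3 4 6 0)) (split 1 3 6 (split 1 2 4 (split 1 2 5 (split 1 2 7 (split 1 4 7 (split 1
  5 7 (split 1 5 8 (split 1 5 9 (split 1 7 8 (split 1 7 9 (split 1 8 9 (hole 1 9 8 7 5) (clash 8 5
  9 0 1)) (clash 7 5 9 0 1)) (clash 7 5 8 0 1)) (clash 5 1 7 0 9)) (clash 5 1 7 0 8)) (hole 1 5 7
  4 2)) (clash 4 2 7 0 1)) (clash 2 1 4 0 7)) (clash 2 1 4 0 5)) (hole 1 2 4 6 3)) (split 1 3 8
  (clash 3 1 8 0 6) (split 1 6 8 (clash 6 1 8 0 3) (hole 0 1 3 6 8))))))))) (split 3 4 7 (clash 7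
  2 4 3 0) (hole 2 4 7 6 3))) (clash 7 2 6 3 0)) (split 3 6 8 (clash 6 3 8 0 7) (hole 0 3 6 7 8)))
  (clash 3 2 8 0 7)) (split 1 2 8 (clash 2 1 8 0 3) (split 1 3 8 (clash 3 1 8 0 2) (hole 0 1 2 3
  8))))) (split 1 2 6 (clash 2 1 6 0 3) (split 1 3 6 (clash 3 1 6 0 2) (hole 0 1 2 3 6))))) (clash
  4 3 5 0 1)) (clash 3 1 4 0 5)) (split 1 3 6 (clash 3 1 6 0 4) (split 1 4 6 (clash 4 1 6 0 3)
  (hole 0 1 3 4 6))))) (split 2 3 6 (clash 2 3 4 6 0) (split 3 4 6 (split 3 4 7 (split 3 6 7 (hole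
  3 5 7 6 4) (clash 6 4 7 0 3)) (clash 4 3 6 0 7)) (hole 0 2 3 4 6))))) (split 4 6 8 (clash 6 4 8
  0 7) (split 4 7 8 (clash 7 4 8 0 6) (hole 0 4 6 7 8))))) (clash 5 6 9 7 0)) (clash 8 7 9 0 5))
  (clash 7 5 8 0 9)) (split 6 7 8 (split 4 6 7 (split 4 6 8 (split 4 7 8 (hole 4 5 8 7 6) (clash 7
  6 8 0 4)) (clash 6 4 7 0 8)) (split 2 4 6 (split 2 3 4 (split 2 3 6 (split 3 4 6 (hole 2 5 6 4
  3) (split 3 4 7 (clash 4 3 7 0 6) (split 3 6 7 (clash 6 3 7 0 4) (hole 0 3 4 6 7)))) (clash 2 3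
  6 4 0)) (split 3 4 6 (split 1 2 3 (split 1 2 5 (split 1 3 5 (split 3 7 8 (split 2 3 6 (split 1 2
  6 (split 1 3 6 (split 1 5 6 (split 1 5 7 (split 1 5 8 (split 1 6 7 (split 1 6 8 (split 1 7 8
  (hole 1 8 7 6 5) (clash 7 5 8 0 1)) (clash 6 5 8 0 1)) (clash 6 5 7 0 1)) (clash 5 1 6 0 8))
  (clash 5 1 6 0 7)) (hole 1 5 6 3 2)) (clash 3 2 6 0 1)) (clash 2 1 3 0 6)) (split 3 6 7 (split 3
  6 8 (hole 3 5 8 7 6) (clash 6 3 7 0 8)) (split 2 3 7 (clash 3 2 7 0 6) (split 2 6 7 (clash 6 2 7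
  0 3) (split 2 4 7 (split 3 4 7 (hole 2 3 6 7 4) (clash 7 2 3 4 0)) (split 3 4 7 (split 3 4 8
  (split 3 6 8 (split 4 6 8 (hole 3 5 8 6 4) (split 1 2 6 (split 1 4 6 (split 1 3 6 (split 1 3 8
  (split 1 6 8 (split 5 7 9 (split 5 6 9 (split 2 7 8 (split 4 7 8 (split 5 8 9 (split 1 5 8
  (split 1 5 9 (split 1 2 9 (split 1 3 9 (split 6 8 9 (split 3 6 9 (split 3 8 9 (split 3 5 9
  (split 2 3 9 (split 2 5 9 (hole 1 9 5 3 2) (clash 5 3 9 0 2)) (clash 3 2 5 0 9)) (hole 3 5 9 8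
  6)) (clash 8 6 9 0 3)) (clash 6 3 8 0 9)) (split 4 6 9 (clash 6 4 9 0 8) (split 4 8 9 (clash 8 4
  9 0 6) (split 6 7 9 (split 4 7 9 (hole 4 6 8 9 7) (split 2 4 9 (clash 4 2 9 0 7) (split 2 7 9
  (clash 7 2 9 0 4) (hole 0 2 4 7 9)))) (split 4 7 9 (clash 9 4 6 7 0) (hole 0 4 6 7 9))))))
  (clash 1 3 9 5 0)) (clash 1 2 9 5 0)) (clash 5 1 8 0 9)) (split 1 5 6 (clash 5 1 6 0 8) (hole 1
  5 8 6 3))) (split 4 8 9 (clash 8 4 9 0 5) (split 6 8 9 (clash 9 5 8 6 0) (split 4 6 9 (clash 4 6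
  8 9 0) (split 6 7 9 (hole 5 8 9 7 6) (split 4 7 9 (clash 9 4 6 7 0) (hole 0 4 6 7 9)))))))
  (clash 7 2 8 0 4)) (split 2 7 9 (clash 7 2 9 0 8) (split 2 8 9 (clash 8 2 9 0 7) (hole 0 2 7 8
  9)))) (clash 5 6 9 7 0)) (split 2 7 9 (clash 7 2 9 0 5) (split 4 7 9 (clash 7 4 9 0 5) (split 2
  4 9 (clash 2 4 7 9 0) (hole 0 2 4 7 9))))) (clash 6 3 8 0 1)) (clash 3 1 6 0 8)) (split 1 3 4
  (clash 3 1 4 0 6) (split 1 2 4 (hole 1 3 6 4 2) (split 1 2 7 (clash 2 1 7 0 4) (split 1 4 7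
  (clash 4 1 7 0 2) (hole 0 1 2 4 7)))))) (clash 6 1 4 2 0)) (split 1 2 4 (clash 2 1 4 0 6) (split
  1 2 7 (clash 2 1 7 0 6) (split 1 4 7 (clash 4 1 7 0 2) (hole 0 1 2 4 7)))))) (split 4 6 8 (clash
  8 3 6 4 0) (split 4 7 8 (hole 3 6 8 7 4) (split 4 7 9 (clash 7 4 9 0 8) (split 4 8 9 (clash 8 4
  9 0 7) (hole 0 4 7 8 9)))))) (clash 3 4 8 7 0)) (hole 0 2 3 4 7))))))) (split 3 7 9 (clash 7 3 9
  0 8) (split 3 8 9 (clash 8 3 9 0 7) (split 4 7 8 (hole 0 3 7 8 9) (split 4 7 9 (clash 7 4 9 0 8)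
  (split 4 8 9 (clash 8 4 9 0 7) (hole 0 4 7 8 9))))))) (clash 3 2 5 0 1)) (clash 2 1 3 0 5))
  (split 1 2 4 (clash 2 1 4 0 3) (split 1 3 4 (clash 3 1 4 0 2) (hole 0 1 2 3 4)))) (clash 4 2 6 0
  3))) (split 2 4 7 (clash 4 2 7 0 6) (split 2 6 7 (clash 6 2 7 0 4) (split 3 4 6 (hole 0 2 4 6 7)
  (split 3 4 7 (clash 4 3 7 0 6) (split 3 6 7 (clash 6 3 7 0 4) (hole 0 3 4 6 7)))))))) (split 6 7
  9 (clash 7 6 9 0 8) (split 6 8 9 (clash 8 6 9 0 7) (hole 0 6 7 8 9))))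

def tree6 : Refutation :=
  split 3 5 8 (split 3 4 8 (split 3 6 8 (split 3 7 8 (split 2 3 5 (split 2 3 8 (split 2 4 8 (split
  2 5 8 (split 2 6 8 (split 2 7 8 (split 7 8 9 (split 2 8 9 (split 3 8 9 (split 5 8 9 (split 2 3 9
  (split 2 5 9 (split 3 5 9 (hole 2 9 8 5 3) (clash 3 5 9 8 0)) (clash 2 5 9 8 0)) (clash 2 3 9 8
  0)) (clash 8 7 9 0 5)) (clash 8 7 9 0 3)) (clash 8 7 9 0 2)) (split 6 7 8 (split 1 2 3 (split 1
  2 5 (split 1 2 8 (split 1 3 5 (split 1 3 8 (split 1 5 8 (hole 1 8 5 3 2) (clash 5 2 8 0 1))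
  (clash 3 2 8 0 1)) (clash 3 2 5 0 1)) (clash 2 1 3 0 8)) (clash 2 1 3 0 5)) (split 2 3 4 (split
  4 5 8 (hole 2 8 5 4 3) (split 2 4 6 (split 2 3 6 (split 2 5 6 (split 2 5 7 (split 2 6 7 (hole 2
  8 7 6 5) (clash 6 5 7 0 2)) (clash 5 2 6 0 7)) (split 3 4 6 (hole 2 5 6 4 3) (split 4 6 8 (split
  4 7 8 (split 4 6 7 (hole 4 5 8 7 6) (split 3 4 7 (clash 4 3 7 0 6) (split 3 6 7 (clash 6 3 7 0
  4) (hole 0 3 4 6 7)))) (clash 8 4 7 6 0)) (clash 6 3 8 0 4)))) (clash 2 3 6 4 0)) (split 3 4 6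
  (clash 4 3 6 0 2) (split 4 6 8 (split 4 7 8 (split 4 6 7 (hole 4 5 8 7 6) (split 3 4 7 (clash 4
  3 7 0 6) (split 3 6 7 (clash 6 3 7 0 4) (hole 0 3 4 6 7)))) (clash 8 4 7 6 0)) (clash 6 2 8 0
  4))))) (split 1 2 4 (clash 2 1 4 0 3) (split 1 3 4 (clash 3 1 4 0 2) (hole 0 1 2 3 4))))) (split
  6 7 9 (clash 7 6 9 0 8) (split 6 8 9 (clash 8 6 9 0 7) (hole 0 6 7 8 9))))) (clash 8 2 7 3 0))
  (clash 8 2 6 3 0)) (clash 5 3 8 0 2)) (clash 8 2 4 3 0)) (clash 3 2 5 0 8)) (split 2 3 4 (clash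
  3 2 4 0 5) (split 2 3 6 (clash 3 2 6 0 5) (split 2 5 6 (clash 5 2 6 0 3) (split 1 2 3 (split 2 4
  6 (split 3 4 6 (hole 2 3 5 6 4) (clash 6 2 3 4 0)) (split 3 4 6 (split 4 6 7 (split 3 4 7 (split
  3 6 7 (split 3 5 7 (split 1 3 6 (split 1 3 5 (split 1 3 7 (split 1 3 8 (split 1 5 7 (split 1 5 8
  (split 1 7 8 (hole 1 8 7 5 3) (clash 7 3 8 0 1)) (clash 5 3 8 0 1)) (clash 5 3 7 0 1)) (clash 3
  1 6 0 8)) (clash 3 1 6 0 7)) (clash 3 1 6 0 5)) (split 1 3 4 (clash 3 1 4 0 6) (split 7 8 9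
  (split 3 7 9 (split 3 8 9 (split 5 7 9 (split 5 8 9 (split 3 5 9 (hole 3 9 8 7 5) (clash 3 5 9 7
  0)) (clash 8 7 9 0 5)) (clash 7 5 8 0 9)) (clash 8 7 9 0 3)) (clash 7 3 8 0 9)) (split 6 7 8
  (split 4 6 8 (split 4 7 8 (split 4 5 8 (split 2 4 8 (split 2 5 8 (split 2 7 8 (split 2 3 8
  (split 1 2 8 (split 1 3 8 (split 1 5 8 (split 1 7 8 (split 1 2 6 (split 1 2 4 (split 1 2 5
  (split 1 4 5 (split 1 3 5 (split 1 3 7 (split 1 5 7 (hole 1 8 7 5 3) (clash 5 3 7 0 1)) (clash 3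
  1 5 0 7)) (hole 1 3 5 4 2)) (clash 4 2 5 0 1)) (clash 2 1 6 0 5)) (clash 2 1 6 0 4)) (split 1 4
  6 (clash 6 1 2 4 0) (split 1 2 4 (split 1 2 5 (split 1 4 5 (split 1 3 5 (split 1 3 7 (split 1 5
  7 (hole 1 8 7 5 3) (clash 5 3 7 0 1)) (clash 3 1 5 0 7)) (hole 1 3 5 4 2)) (clash 4 2 5 0 1))
  (clash 2 1 4 0 5)) (hole 0 1 2 4 6)))) (clash 8 1 7 2 0)) (clash 8 1 5 2 0)) (clash 3 2 8 0 1))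
  (clash 2 1 3 0 8)) (hole 2 3 8 5 4)) (clash 8 2 7 4 0)) (clash 5 4 8 0 2)) (clash 4 2 5 0 8))
  (hole 4 5 8 7 6)) (clash 7 6 8 0 4)) (clash 6 4 7 0 8)) (split 6 7 9 (clash 7 6 9 0 8) (split 6
  8 9 (clash 8 6 9 0 7) (hole 0 6 7 8 9))))))) (hole 3 5 7 6 4)) (clash 6 4 7 0 3)) (clash 4 3 6 0
  7)) (split 2 4 7 (clash 4 2 7 0 6) (split 2 6 7 (clash 6 2 7 0 4) (hole 0 2 4 6 7)))) (hole 0 2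
  3 4 6))) (split 1 2 4 (clash 2 1 4 0 3) (split 1 3 4 (clash 3 1 4 0 2) (hole 0 1 2 3 4))))))))
  (clash 8 3 7 5 0)) (clash 8 3 6 5 0)) (clash 3 4 8 5 0)) (split 3 5 7 (clash 5 3 7 0 8) (split 4
  5 8 (clash 5 4 8 0 3) (split 2 5 8 (split 2 3 5 (split 2 3 8 (split 2 6 8 (split 2 7 8 (split 7
  8 9 (split 2 7 9 (split 2 8 9 (split 5 7 9 (split 5 8 9 (split 2 5 9 (split 5 6 9 (split 2 5 7
  (hole 2 9 8 7 5) (split 2 5 6 (clash 5 2 6 0 7) (split 6 7 8 (split 6 7 9 (split 6 8 9 (hole 5 9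
  8 7 6) (clash 8 7 9 0 6)) (clash 7 6 8 0 9)) (split 2 6 7 (split 4 6 7 (split 2 4 6 (split 2 4 7
  (split 3 4 6 (split 3 4 7 (split 3 6 7 (hole 3 5 7 6 4) (clash 6 4 7 0 3)) (clash 4 3 6 0 7))
  (hole 2 5 7 6 4)) (clash 4 2 6 0 7)) (split 1 2 5 (split 1 2 8 (split 1 2 9 (split 1 5 8 (split
  1 5 9 (split 1 8 9 (hole 1 9 8 5 2) (clash 8 2 9 0 1)) (clash 5 2 9 0 1)) (clash 5 2 8 0 1))
  (clash 2 1 5 0 9)) (clash 2 1 5 0 8)) (split 1 2 3 (clash 2 1 3 0 5) (split 1 2 4 (clash 2 1 4 0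
  5) (split 1 2 6 (clash 2 1 6 0 5) (split 1 4 6 (clash 4 1 6 0 2) (split 1 5 6 (clash 5 1 6 0 2)
  (split 2 3 4 (split 3 4 6 (clash 4 3 6 0 2) (split 1 4 5 (split 1 3 5 (split 1 3 4 (hole 1 2 5 4
  3) (split 1 3 6 (clash 3 1 6 0 4) (hole 0 1 3 4 6))) (split 1 3 4 (clash 3 1 4 0 5) (split 1 3 6
  (clash 3 1 6 0 5) (hole 0 1 3 4 6)))) (hole 0 1 4 5 6))) (hole 0 1 2 4 6))))))))) (split 4 6 8
  (clash 6 4 8 0 7) (split 4 7 8 (clash 7 4 8 0 6) (hole 0 4 6 7 8)))) (clash 7 2 8 0 6)))))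
  (clash 5 6 9 7 0)) (clash 2 5 9 8 0)) (clash 8 7 9 0 5)) (clash 7 5 8 0 9)) (clash 8 7 9 0 2))
  (clash 7 2 8 0 9)) (split 6 7 8 (split 4 6 7 (split 4 6 8 (split 4 7 8 (hole 4 5 8 7 6) (clash 7
  6 8 0 4)) (clash 6 4 7 0 8)) (split 2 4 6 (split 3 4 6 (split 2 3 4 (split 2 3 6 (split 2 5 6
  (split 2 5 7 (split 2 6 7 (hole 2 8 7 6 5) (clash 6 5 7 0 2)) (clash 5 2 6 0 7)) (hole 2 5 6 4
  3)) (clash 3 2 4 0 6)) (split 1 2 3 (split 1 2 5 (split 1 2 8 (split 1 5 8 (split 5 8 9 (split 1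
  5 9 (split 1 8 9 (split 2 5 9 (split 2 8 9 (split 1 2 9 (hole 1 9 8 5 2) (clash 1 2 9 5 0))
  (clash 8 5 9 0 2)) (clash 5 2 8 0 9)) (clash 8 5 9 0 1)) (clash 5 1 8 0 9)) (split 4 5 9 (clash
  5 4 9 0 8) (split 6 8 9 (clash 8 6 9 0 5) (split 5 7 9 (split 5 6 9 (split 6 7 9 (hole 5 8 9 7
  6) (split 4 6 9 (clash 6 4 9 0 7) (split 4 7 9 (clash 7 4 9 0 6) (hole 0 4 6 7 9)))) (clash 5 6
  9 7 0)) (split 4 7 9 (clash 9 4 5 7 0) (split 6 7 9 (clash 7 6 9 0 5) (split 4 6 9 (clash 4 6 7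
  9 0) (hole 0 4 6 7 9)))))))) (clash 5 2 8 0 1)) (clash 2 1 3 0 8)) (clash 2 1 3 0 5)) (split 1 2
  4 (clash 2 1 4 0 3) (split 1 3 4 (clash 3 1 4 0 2) (hole 0 1 2 3 4))))) (split 3 4 7 (clash 4 3
  7 0 6) (split 3 6 7 (clash 6 3 7 0 4) (hole 0 3 4 6 7)))) (split 2 4 7 (clash 4 2 7 0 6) (split
  2 6 7 (clash 6 2 7 0 4) (split 3 4 6 (hole 0 2 4 6 7) (split 3 4 7 (clash 4 3 7 0 6) (split 3 6
  7 (clash 6 3 7 0 4) (hole 0 3 4 6 7)))))))) (split 6 7 9 (clash 7 6 9 0 8) (split 6 8 9 (clash 8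
  6 9 0 7) (hole 0 6 7 8 9))))) (clash 8 2 7 5 0)) (clash 8 2 6 5 0)) (clash 8 2 3 5 0)) (clash 5
  2 8 0 3)) (split 2 5 6 (clash 5 2 6 0 8) (split 2 5 7 (clash 5 2 7 0 8) (split 2 3 5 tree5
  (split 2 3 4 (clash 3 2 4 0 5) (split 2 3 6 (clash 3 2 6 0 5) (split 2 4 6 (split 3 4 6 (hole 2
  3 5 6 4) (clash 6 2 3 4 0)) (split 3 4 6 (split 4 6 7 (split 3 4 7 (split 3 6 7 (hole 3 5 7 6 4)
  (clash 6 4 7 0 3)) (clash 4 3 6 0 7)) (split 2 4 7 (clash 4 2 7 0 6) (split 2 6 7 (clash 6 2 7 0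
  4) (hole 0 2 4 6 7)))) (hole 0 2 3 4 6)))))))))))

def tree7 : Refutation :=
  split 4 5 7 (split 2 4 7 (split 2 5 7 (split 3 4 7 (split 3 5 7 (split 3 6 7 (split 4 6 7 (split
  5 7 8 (split 3 5 8 (split 3 7 8 (split 4 5 8 (split 4 7 8 (split 3 4 8 (hole 3 8 7 5 4) (clash 3
  4 8 5 0)) (clash 7 5 8 0 4)) (clash 5 4 7 0 8)) (clash 7 5 8 0 3)) (clash 5 3 7 0 8)) (split 6 7
  8 (clash 7 6 8 0 5) (split 5 7 9 (split 3 5 9 (split 3 7 9 (split 4 5 9 (split 4 7 9 (split 3 4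
  9 (hole 3 9 7 5 4) (clash 3 4 9 5 0)) (clash 7 5 9 0 4)) (clash 5 4 7 0 9)) (clash 7 5 9 0 3))
  (clash 5 3 7 0 9)) (split 6 7 9 (clash 7 6 9 0 5) (split 7 8 9 (split 2 3 4 (split 2 3 5 (split
  2 3 7 (hole 2 7 5 4 3) (clash 3 2 4 0 7)) (clash 3 2 4 0 5)) (split 3 4 6 (split 5 6 8 (split 1
  2 3 (split 4 7 8 (split 3 4 8 (split 3 7 8 (split 3 7 9 (split 3 8 9 (split 4 7 9 (split 4 8 9
  (split 3 4 9 (hole 3 9 8 7 4) (clash 3 4 9 7 0)) (clash 8 7 9 0 4)) (clash 7 4 8 0 9)) (clash 8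
  7 9 0 3)) (clash 7 3 8 0 9)) (clash 7 4 8 0 3)) (clash 4 3 7 0 8)) (split 2 3 5 (split 1 2 5
  (split 1 2 7 (split 1 3 5 (split 1 3 7 (split 1 5 7 (split 2 3 7 (hole 1 7 5 3 2) (clash 3 2 5 0
  7)) (clash 5 2 7 0 1)) (clash 3 1 5 0 7)) (clash 3 2 5 0 1)) (clash 2 1 5 0 7)) (clash 2 1 3 0
  5)) (split 2 3 7 (split 1 2 7 (split 1 3 7 (split 1 4 7 (split 1 5 7 (split 3 5 6 (split 3 5 8
  (split 3 6 8 (split 3 7 8 (split 3 7 9 (split 3 8 9 (split 1 3 8 (split 1 3 9 (split 1 7 8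
  (split 1 7 9 (split 1 8 9 (hole 1 9 8 7 3) (clash 8 3 9 0 1)) (clash 7 3 9 0 1)) (clash 7 3 8 0
  1)) (clash 3 1 7 0 9)) (clash 3 1 7 0 8)) (clash 8 7 9 0 3)) (clash 7 3 8 0 9)) (hole 3 7 8 6
  5)) (clash 6 5 8 0 3)) (clash 5 3 6 0 8)) (split 2 3 6 (clash 3 2 6 0 5) (split 2 5 6 (clash 5 2
  6 0 3) (split 2 4 6 (hole 2 3 5 6 4) (split 3 7 9 (split 1 3 9 (split 1 7 9 (split 2 3 9 (split
  2 7 9 (split 1 2 9 (hole 1 9 7 3 2) (clash 1 2 9 3 0)) (clash 7 3 9 0 2)) (clash 3 2 7 0 9))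
  (clash 7 3 9 0 1)) (clash 3 1 7 0 9)) (split 3 7 8 (clash 7 3 8 0 9) (split 4 7 9 (clash 7 4 9 0
  3) (split 4 6 8 (split 3 4 8 (split 3 6 8 (split 1 2 5 (split 1 4 5 (split 1 3 5 (split 1 3 4
  (hole 1 7 5 4 3) (split 4 5 8 (split 3 5 8 (hole 3 7 8 5 4) (clash 8 3 5 4 0)) (split 3 5 8
  (split 1 3 8 (split 1 5 8 (split 1 7 8 (split 1 7 9 (split 1 3 9 (split 3 4 9 (split 3 8 9
  (split 3 5 9 (split 4 5 9 (hole 3 7 9 5 4) (split 5 6 9 (split 5 8 9 (hole 3 7 9 8 5) (split 6 8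
  9 (clash 9 5 8 6 0) (split 4 8 9 (clash 9 4 5 8 0) (split 4 6 9 (hole 4 5 8 9 6) (split 2 4 9
  (clash 4 2 9 0 6) (split 2 6 9 (clash 6 2 9 0 4) (hole 0 2 4 6 9))))))) (clash 5 3 9 0 6)))
  (clash 3 5 9 8 0)) (split 4 8 9 (clash 9 3 8 4 0) (split 5 8 9 (clash 8 5 9 0 3) (split 6 8 9
  (clash 8 6 9 0 3) (split 4 5 9 (clash 4 5 8 9 0) (split 5 6 9 (split 4 6 9 (hole 4 5 8 9 6)
  (split 2 4 9 (clash 4 2 9 0 6) (split 2 6 9 (clash 6 2 9 0 4) (hole 0 2 4 6 9)))) (split 4 6 9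
  (clash 9 4 5 6 0) (hole 0 4 5 6 9)))))))) (clash 3 1 9 0 4)) (clash 9 1 3 7 0)) (clash 7 1 8 0
  9)) (hole 1 7 8 5 3)) (clash 5 3 8 0 1)) (clash 3 1 5 0 8)) (hole 3 5 8 6 4)))) (split 1 3 4
  (clash 3 1 4 0 5) (split 1 2 4 (hole 1 3 5 4 2) (split 1 2 6 (clash 2 1 6 0 4) (split 1 4 6
  (clash 4 1 6 0 2) (hole 0 1 2 4 6)))))) (clash 5 1 4 2 0)) (split 1 2 4 (clash 2 1 4 0 5) (split
  1 2 6 (clash 2 1 6 0 5) (split 1 4 6 (clash 4 1 6 0 2) (hole 0 1 2 4 6))))) (clash 6 4 8 0 3))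
  (clash 4 3 6 0 8)) (split 2 4 8 (clash 4 2 8 0 6) (split 2 6 8 (clash 6 2 8 0 4) (hole 0 2 4 6
  8))))))))))) (clash 7 1 5 2 0)) (clash 7 1 4 2 0)) (clash 3 2 7 0 1)) (clash 2 1 3 0 7)) (hole 2
  3 7 5 4)))) (split 1 2 4 (clash 2 1 4 0 3) (split 1 3 4 (clash 3 1 4 0 2) (hole 0 1 2 3 4))))
  (split 4 5 8 (clash 5 4 8 0 6) (split 4 6 8 (clash 6 4 8 0 5) (hole 0 4 5 6 8)))) (split 2 3 6
  (clash 3 2 6 0 4) (split 2 4 6 (clash 4 2 6 0 3) (hole 0 2 3 4 6))))) (split 6 8 9 (clash 9 6 7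
  8 0) (hole 0 6 7 8 9))))))) (clash 7 4 6 5 0)) (clash 7 3 6 5 0)) (clash 5 4 7 0 3)) (clash 4 3
  5 0 7)) (clash 5 4 7 0 2)) (clash 4 2 5 0 7)) (split 5 7 8 (split 5 6 8 (split 3 5 6 (split 3 5
  7 (split 3 5 8 (split 3 6 7 (split 3 6 8 (split 3 7 8 (split 6 7 8 (hole 3 8 7 6 5) (split 7 8 9
  (split 3 7 9 (split 3 8 9 (split 5 7 9 (split 5 8 9 (split 3 5 9 (hole 3 9 8 7 5) (clash 3 5 9 7
  0)) (clash 8 7 9 0 5)) (clash 7 5 8 0 9)) (clash 8 7 9 0 3)) (clash 7 3 8 0 9)) (split 6 7 9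
  (clash 7 6 9 0 8) (split 6 8 9 (clash 8 6 9 0 7) (hole 0 6 7 8 9))))) (clash 7 5 8 0 3)) (clash
  6 5 8 0 3)) (clash 6 5 7 0 3)) (clash 5 3 6 0 8)) (clash 5 3 6 0 7)) tree6) (clash 5 6 8 7 0))
  (split 4 5 8 (clash 5 4 8 0 7) (split 4 7 8 (clash 7 4 8 0 5) (split 6 7 8 (clash 7 6 8 0 5)
  (split 4 6 7 (split 5 6 8 (split 4 6 8 (hole 4 5 7 8 6) (split 3 4 6 (split 3 4 7 (split 3 6 7
  (split 2 4 6 (split 2 4 7 (split 2 6 7 (split 5 8 9 (split 5 6 9 (split 7 8 9 (split 1 4 6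
  (split 1 4 5 (split 5 7 9 (split 3 5 7 (split 3 5 9 (split 3 6 9 (split 3 7 9 (split 3 8 9
  (split 3 4 9 (split 2 5 7 (split 2 5 9 (split 2 6 9 (split 2 7 9 (split 2 8 9 (split 2 3 4
  (split 2 3 5 (split 2 3 7 (split 2 3 9 (hole 2 9 7 5 3) (clash 3 2 4 0 9)) (clash 3 2 4 0 7))
  (clash 3 2 4 0 5)) (split 1 3 5 (split 1 3 7 (split 1 3 9 (split 1 5 7 (split 1 5 9 (split 1 7 9
  (split 2 3 5 (split 2 3 7 (split 2 3 9 (hole 2 9 7 5 3) (clash 3 2 5 0 9)) (clash 3 2 5 0 7))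
  (hole 1 9 7 5 3)) (clash 7 3 9 0 1)) (clash 5 3 9 0 1)) (clash 5 3 7 0 1)) (clash 3 1 5 0 9))
  (clash 3 1 5 0 7)) (split 1 3 4 (clash 3 1 4 0 5) (split 3 5 6 (split 3 5 8 (split 3 6 8 (split
  3 7 8 (split 1 2 3 (split 2 3 5 (clash 3 2 5 0 1) (split 1 3 6 (split 1 2 6 (split 1 2 7 (split
  1 2 9 (split 1 3 7 (split 1 3 8 (split 1 3 9 (split 1 7 8 (split 1 7 9 (split 1 8 9 (hole 1 9 8
  7 3) (clash 9 1 8 2 0)) (clash 7 2 9 0 1)) (clash 7 3 8 0 1)) (clash 3 1 6 0 9)) (clash 3 1 6 0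
  8)) (clash 3 1 6 0 7)) (clash 2 1 6 0 9)) (clash 2 1 6 0 7)) (clash 1 2 6 3 0)) (split 2 3 6
  (clash 3 2 6 0 1) (split 2 3 7 (split 1 2 7 (split 1 2 9 (split 1 3 7 (split 1 3 8 (split 1 3 9
  (split 1 7 8 (split 1 7 9 (split 1 8 9 (hole 1 9 8 7 3) (clash 9 1 8 2 0)) (clash 7 2 9 0 1))
  (clash 7 3 8 0 1)) (clash 3 1 7 0 9)) (clash 3 1 7 0 8)) (clash 3 2 7 0 1)) (clash 2 1 7 0 9))
  (clash 2 1 3 0 7)) (split 2 3 9 (split 2 5 6 (hole 2 3 7 6 5) (split 1 2 9 (split 1 3 9 (split 1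
  7 9 (split 1 8 9 (split 1 2 5 (split 1 2 7 (split 1 5 7 (split 1 3 7 (split 1 3 8 (split 1 7 8
  (hole 1 9 8 7 3) (clash 7 3 8 0 1)) (clash 3 1 7 0 8)) (hole 1 3 7 5 2)) (clash 5 2 7 0 1))
  (clash 2 1 5 0 7)) (split 1 2 4 (clash 2 1 4 0 5) (split 1 2 6 (clash 2 1 6 0 5) (split 1 5 6
  (clash 5 1 6 0 2) (hole 1 2 5 6 4))))) (clash 9 1 8 2 0)) (clash 9 1 7 2 0)) (clash 3 2 9 0 1))
  (clash 2 1 3 0 9))) (hole 2 3 9 7 5)))))) (split 1 2 4 (clash 2 1 4 0 3) (hole 0 1 2 3 4)))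
  (hole 3 7 8 6 5)) (clash 6 5 8 0 3)) (clash 5 3 6 0 8)) (split 1 3 6 (clash 3 1 6 0 5) (split 1
  5 6 (clash 5 1 6 0 3) (split 2 3 5 (hole 1 3 5 6 4) (split 2 3 6 (clash 3 2 6 0 5) (split 2 5 6
  (clash 5 2 6 0 3) (hole 2 3 5 6 4)))))))))) (clash 9 2 8 5 0)) (clash 7 5 9 0 2)) (clash 9 2 6 5
  0)) (clash 5 2 7 0 9)) (split 2 5 6 (clash 5 2 6 0 7) (hole 2 5 7 6 4))) (clash 3 4 9 5 0))
  (clash 9 3 8 5 0)) (clash 7 5 9 0 3)) (clash 9 3 6 5 0)) (clash 5 3 7 0 9)) (split 3 5 6 (clash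
  5 3 6 0 7) (hole 3 5 7 6 4))) (split 6 7 9 (clash 9 5 7 6 0) (split 6 8 9 (hole 5 7 9 8 6)
  (split 4 6 9 (clash 6 4 9 0 8) (split 4 8 9 (clash 8 4 9 0 6) (hole 0 4 6 8 9)))))) (clash 4 1 6
  0 5)) (split 1 4 8 (clash 4 1 8 0 6) (split 1 6 8 (clash 6 1 8 0 4) (hole 0 1 4 6 8)))) (clash 8
  5 9 0 7)) (clash 5 6 9 8 0)) (split 4 8 9 (clash 8 4 9 0 5) (split 6 8 9 (clash 8 6 9 0 5)
  (split 4 6 9 (clash 4 6 8 9 0) (hole 0 4 6 8 9))))) (clash 6 4 7 0 2)) (clash 4 2 6 0 7)) (split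
  2 4 8 (clash 4 2 8 0 6) (split 2 6 8 (clash 6 2 8 0 4) (hole 0 2 4 6 8)))) (clash 6 4 7 0 3))
  (clash 4 3 6 0 7)) (split 3 4 8 (clash 4 3 8 0 6) (split 3 6 8 (clash 6 3 8 0 4) (hole 0 3 4 6
  8))))) (split 4 6 8 (clash 8 4 5 6 0) (hole 0 4 5 6 8))) (split 4 6 8 (clash 6 4 8 0 7) (hole 0
  4 6 7 8)))))))

/-- The complete case distinction, starting from ten points sorted around `0`. -/
def harborth : Refutation :=
  split 4 5 6 (split 5 6 7 (split 4 5 7 (split 4 6 7 (split 6 7 8 (split 4 6 8 (split 4 7 8 (split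
  5 6 8 (split 5 7 8 (split 4 5 8 (hole 4 8 7 6 5) (clash 4 5 8 6 0)) (clash 7 6 8 0 5)) (clash 6
  5 7 0 8)) (clash 7 6 8 0 4)) (clash 6 4 7 0 8)) (split 3 4 5 (split 3 4 6 (split 3 4 7 (split 3
  5 6 (split 3 5 7 (split 3 6 7 (hole 3 7 6 5 4) (clash 6 4 7 0 3)) (clash 5 4 7 0 3)) (clash 5 4
  6 0 3)) (clash 4 3 5 0 7)) (clash 4 3 5 0 6)) (split 2 3 4 (split 7 8 9 (split 5 7 8 (split 4 5
  8 (split 4 7 8 (split 4 7 9 (split 4 8 9 (split 5 7 9 (split 5 8 9 (split 4 5 9 (hole 4 9 8 7 5)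
  (clash 4 5 9 7 0)) (clash 8 7 9 0 5)) (clash 7 5 8 0 9)) (clash 8 7 9 0 4)) (clash 7 4 8 0 9))
  (clash 7 5 8 0 4)) (clash 5 4 7 0 8)) (split 6 7 9 (split 4 6 9 (split 4 7 9 (split 5 6 9 (split
  5 7 9 (split 4 5 9 (hole 4 9 7 6 5) (clash 4 5 9 6 0)) (clash 7 6 9 0 5)) (clash 6 5 7 0 9))
  (clash 7 6 9 0 4)) (clash 6 4 7 0 9)) (split 3 4 6 (split 2 3 6 (split 2 4 6 (split 2 4 7 (split
  2 6 7 (split 3 4 7 (split 3 6 7 (split 2 3 7 (hole 2 7 6 4 3) (clash 2 3 7 4 0)) (clash 6 4 7 0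
  3)) (clash 4 3 6 0 7)) (clash 6 4 7 0 2)) (clash 4 2 6 0 7)) (clash 4 3 6 0 2)) (clash 3 2 4 0
  6)) (split 3 6 7 tree1 (split 3 6 8 (clash 6 3 8 0 7) (split 3 7 8 (clash 7 3 8 0 6) (hole 0 3 6
  7 8))))))) (split 6 7 9 (clash 7 6 9 0 8) (split 6 8 9 (clash 8 6 9 0 7) (hole 0 6 7 8 9))))
  (split 2 3 5 (clash 3 2 5 0 4) (split 2 4 5 (clash 4 2 5 0 3) (hole 0 2 3 4 5)))))) (clash 6 5 7
  0 4)) (clash 5 4 6 0 7)) (split 6 7 8 (split 3 5 6 (split 2 5 6 (split 4 6 7 (split 4 5 7 (split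
  4 6 8 (split 4 7 8 (split 4 5 8 (split 3 4 6 (split 3 4 7 (split 3 4 8 (split 3 6 7 (split 3 6 8
  (split 3 7 8 (hole 3 8 7 6 4) (clash 7 4 8 0 3)) (clash 6 4 8 0 3)) (clash 6 4 7 0 3)) (clash 4
  3 6 0 8)) (clash 4 3 6 0 7)) (split 3 4 5 (clash 4 3 5 0 6) tree2)) (clash 4 5 8 6 0)) (clash 7
  6 8 0 4)) (clash 6 4 7 0 8)) (clash 7 4 5 6 0)) tree4) (split 2 5 7 (clash 5 2 7 0 6) (split 2 6
  7 (clash 6 2 7 0 5) (hole 0 2 5 6 7)))) (split 3 5 7 (clash 5 3 7 0 6) (split 3 6 7 (clash 6 3 7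
  0 5) (hole 0 3 5 6 7)))) (split 5 6 8 (clash 6 5 8 0 7) (split 5 7 8 (clash 7 5 8 0 6) (hole 0 5
  6 7 8))))) (split 5 6 7 (split 3 4 5 (split 2 4 5 tree7 (split 2 4 6 (clash 4 2 6 0 5) (split 2
  5 6 (clash 5 2 6 0 4) (hole 0 2 4 5 6)))) (split 3 4 6 (clash 4 3 6 0 5) (split 3 5 6 (clash 5 3
  6 0 4) (hole 0 3 4 5 6)))) (split 4 5 7 (clash 5 4 7 0 6) (split 4 6 7 (clash 6 4 7 0 5) (hole 0
  4 5 6 7))))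

theorem check_harborth : withValue initial (check harborth) = true := by
  decide +kernel

end Refutation

/-- Every set of 10 points in the plane in general position contains a 5-hole:
`h⁽²⁾(5) ≤ 10`. -/
theorem h2_5_le_10 (S : Finset (Fin 2 → ℝ)) (hcard : S.card = 10)
    (hgp : InGeneralPosition 2 S) :
    ∃ X : Finset (Fin 2 → ℝ), IsHole 2 5 S X := by
  obtain ⟨p, hinj, hS, hpos⟩ := exists_sorted S hcard hgp
  have hmem : ∀ i < 10, p i ∈ S := fun i hi => (hS _).2 ⟨i, hi, rfl⟩
  have hne : ∀ i j, i < j → j < 10 → p i ≠ p j := fun i j hij hj h =>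
    hij.ne (hinj (hij.trans hj) hj h)
  have hp : ∀ i j k, i < j → j < k → k < 10 → orient (p i) (p j) (p k) ≠ 0 :=
    fun i j k hij hjk hk => orient_ne_zero hgp (hmem i (by omega)) (hmem j (by omega)) (hmem k hk)
      (hne i j hij (by omega)) (hne i k (by omega) hk) (hne j k hjk hk)
  obtain ⟨v, hlen, hnd, hv, hsep⟩ :=
    Refutation.check_sound hp _ _ (Refutation.initial_correct hpos)
      ((Refutation.withValue_eq _ _).symm.trans Refutation.check_harborth)
  have key : ∀ q < 10, p q ∉
      convexHull ℝ (↑((v.toFinset.image p).erase (p q)) : Set (Fin 2 → ℝ)) := by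
    intro q hq hmem
    refine hsep q hq (convexHull_mono ?_ hmem)
    intro y hy
    obtain ⟨hyq, hy⟩ := Finset.mem_erase.1 (Finset.mem_coe.1 hy)
    obtain ⟨x, hx, rfl⟩ := Finset.mem_image.1 hy
    refine ⟨x, (List.mem_erase_of_ne ?_).2 (List.mem_toFinset.1 hx), rfl⟩
    rintro rfl
    exact hyq rfl
  refine ⟨v.toFinset.image p, ?_, ?_, ?_, ?_⟩
  · intro y hy
    obtain ⟨x, hx, rfl⟩ := Finset.mem_image.1 hy
    exact hmem x (hv x (List.mem_toFinset.1 hx))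
  · rw [Finset.card_image_of_injOn, List.toFinset_card_of_nodup hnd, hlen]
    intro x hx y hy h
    exact hinj (hv x (List.mem_toFinset.1 (Finset.mem_coe.1 hx)))
      (hv y (List.mem_toFinset.1 (Finset.mem_coe.1 hy))) h
  · intro y hy
    obtain ⟨x, hx, rfl⟩ := Finset.mem_image.1 hy
    exact key x (hv x (List.mem_toFinset.1 hx))
  · intro y hyS hyX
    obtain ⟨i, hi, rfl⟩ := (hS y).1 hyS
    have := key i hi
    rwa [Finset.erase_eq_of_notMem hyX] at this
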